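/- arXiv:2105.03805 — 5 statements merged into one kernel-verified Lean document; each statement's English description precedes it below -/
import Mathlib

section
/- Let λ ≥ 0, μ₁ ∈ ℝ and let n ≥ 2 be an integer. Then there exists a unique function h that is real-analytic on [0,∞) and satisfies 2r²h(r)h''(r) = (n-1)h(r)(h(r)-1) + r h'(r)(r h'(r) - λr - (n-1)) with h(r) > 0 for all r > 0, together with h(0) = 1 and h'(0) = μ₁. -/
open Set Filter Topology

/-- `h` is a real-analytic solution on `[0,∞)` of
`2r²h h'' = (n-1)h(h-1) + r h'(r h' - λr - (n-1))`, `h > 0` on `(0,∞)`,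
with `h(0) = 1` and `h'(0) = μ₁`. -/
def IsAnalyticSol (n : ℕ) (lam μ₁ : ℝ) (h : ℝ → ℝ) : Prop :=
  AnalyticOn ℝ h (Set.Ici 0) ∧
  (∀ r : ℝ, 0 < r →
    2 * r ^ 2 * h r * deriv (deriv h) r =
      ((n : ℝ) - 1) * h r * (h r - 1) +
        r * deriv h r * (r * deriv h r - lam * r - ((n : ℝ) - 1)) ∧ 0 < h r) ∧
  h 0 = 1 ∧ derivWithin h (Set.Ici 0) 0 = μ₁

/-!
In the variable `t = log r`, the triple `(1 / h - 1, r / h, r h' / (2 h))` solves an autonomous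
system `u' = L u + B(u, u)`; in the variable `r` this is the Briot–Bouquet equation
`r u' = L u + B(u, u)` with `u(0) = 0`. The eigenvalues of `L` are `1`, `1` and `-(n - 1) / 2`. As
no integer `k ≥ 2` is among them, the power series of `u` is determined by its linear term, and it
converges because the resolvents of `L` at `k` are `O(1 / k)`. The linear term is an eigenvector
for the eigenvalue `1`, fixed by `h'(0)`; this gives a unique germ of a solution at `0`, which
propagates uniquely by the identity theorem. For `λ ≥ 0` the germ extends to all `r > 0`: the
quantity `(h' - λ - (n - 1) / r) / √h` is nondecreasing in `r`, which bounds `1 / h` and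
`r h' / (2 h)` on bounded intervals of `t`.
-/

open Finset.HasAntidiagonal (antidiagonal)

section PowerSeries

variable {𝕜 : Type*} [NontriviallyNormedField 𝕜]
  {E : Type*} [NormedAddCommGroup E] [NormedSpace 𝕜 E]
  {F : Type*} [NormedAddCommGroup F] [NormedSpace 𝕜 F]
  {G : Type*} [NormedAddCommGroup G] [NormedSpace 𝕜 G]

lemma exists_hasFPowerSeriesAt_zero_of_norm_coeff_le [CompleteSpace E] {a : ℕ → E} {C M : ℝ}
    (hM : 0 < M) (ha : ∀ n, ‖a n‖ ≤ C * M ^ n) :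
    ∃ (f : 𝕜 → E) (p : FormalMultilinearSeries 𝕜 𝕜 E),
      HasFPowerSeriesAt f p 0 ∧ ∀ n, p.coeff n = a n := by
  let p : FormalMultilinearSeries 𝕜 𝕜 E := fun n =>
    ContinuousMultilinearMap.mkPiRing 𝕜 (Fin n) (a n)
  have radius_pos : 0 < p.radius := by
    have inv_le_radius : (M⁻¹.toNNReal : ENNReal) ≤ p.radius := by
      refine p.le_radius_of_bound C fun n => ?_
      rw [ContinuousMultilinearMap.norm_mkPiRing, Real.coe_toNNReal _ (by positivity), inv_pow,
        ← div_eq_mul_inv, div_le_iff₀ (by positivity)]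
      exact ha n
    exact lt_of_lt_of_le (by simpa using hM) inv_le_radius
  exact ⟨p.sum, p, (p.hasFPowerSeriesOnBall radius_pos).hasFPowerSeriesAt, fun n => by
    simp [p, FormalMultilinearSeries.coeff]⟩

lemma hasSum_antidiagonal_bilinear [CompleteSpace G] (B : E →L[𝕜] F →L[𝕜] G)
    {u : ℕ → E} {v : ℕ → F} {x : E} {y : F} (hu : HasSum u x) (hv : HasSum v y)
    (hu_norm : Summable fun n => ‖u n‖) (hv_norm : Summable fun n => ‖v n‖) :
    HasSum (fun n => ∑ ij ∈ antidiagonal n, B (u ij.1) (v ij.2)) (B x y) := by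
  have summable_prod : Summable fun ij : ℕ × ℕ => B (u ij.1) (v ij.2) := by
    refine .of_norm_bounded (g := fun ij : ℕ × ℕ => ‖B‖ * (‖u ij.1‖ * ‖v ij.2‖)) ?_ fun ij => ?_
    · exact (hu_norm.mul_of_nonneg hv_norm (fun _ => norm_nonneg _)
        fun _ => norm_nonneg _).mul_left _
    · rw [← mul_assoc]
      exact B.le_opNorm₂ _ _
  have hasSum_prod : HasSum (fun ij : ℕ × ℕ => B (u ij.1) (v ij.2)) (B x y) := by
    have tsum_eq := (summable_prod.hasSum.prod_fiberwise fun i => (B (u i)).hasSum hv).unique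
      ((B.flip y).hasSum hu)
    simpa only [tsum_eq, ContinuousLinearMap.flip_apply] using summable_prod.hasSum
  rw [← Finset.HasAntidiagonal.sigmaAntidiagonalEquivProd.hasSum_iff] at hasSum_prod
  convert hasSum_prod.sigma fun n => hasSum_fintype _ using 2 with n
  exact (Finset.sum_coe_sort _ fun ij : ℕ × ℕ => B (u ij.1) (v ij.2)).symm

lemma eventually_summable_norm_pow_smul_coeff {f : 𝕜 → E} {p : FormalMultilinearSeries 𝕜 𝕜 E}
    (hf : HasFPowerSeriesAt f p 0) : ∀ᶠ x in 𝓝 (0 : 𝕜), Summable fun n => ‖x ^ n • p.coeff n‖ := by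
  filter_upwards [Metric.eball_mem_nhds (0 : 𝕜) hf.radius_pos] with x hx
  simpa only [FormalMultilinearSeries.apply_eq_pow_smul_coeff] using p.summable_norm_apply hx

lemma eventually_hasSum_bilinear_coeff [CompleteSpace G] (B : E →L[𝕜] F →L[𝕜] G)
    {f : 𝕜 → E} {g : 𝕜 → F} {p : FormalMultilinearSeries 𝕜 𝕜 E}
    {q : FormalMultilinearSeries 𝕜 𝕜 F} (hf : HasFPowerSeriesAt f p 0)
    (hg : HasFPowerSeriesAt g q 0) :
    ∀ᶠ x in 𝓝 (0 : 𝕜), HasSum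
      (fun n => x ^ n • ∑ ij ∈ antidiagonal n, B (p.coeff ij.1) (q.coeff ij.2))
      (B (f x) (g x)) := by
  filter_upwards [hasFPowerSeriesAt_iff.1 hf, hasFPowerSeriesAt_iff.1 hg,
    eventually_summable_norm_pow_smul_coeff hf,
    eventually_summable_norm_pow_smul_coeff hg] with x hfx hgx hfx_norm hgx_norm
  rw [zero_add] at hfx hgx
  convert hasSum_antidiagonal_bilinear B hfx hgx hfx_norm hgx_norm using 2 with n
  rw [Finset.smul_sum]
  refine Finset.sum_congr rfl fun ij hij => ?_
  rw [← Finset.HasAntidiagonal.mem_antidiagonal.1 hij]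
  simp [pow_add, smul_smul, mul_comm]

lemma eventually_hasSum_smul_deriv [CompleteSpace E] {f : 𝕜 → E}
    {p : FormalMultilinearSeries 𝕜 𝕜 E} (hf : HasFPowerSeriesAt f p 0) :
    ∀ᶠ x in 𝓝 (0 : 𝕜), HasSum (fun n : ℕ => x ^ n • (n : 𝕜) • p.coeff n) (x • deriv f x) := by
  obtain ⟨r, hr⟩ := hf
  filter_upwards [hasFPowerSeriesAt_iff.1 hr.fderiv.hasFPowerSeriesAt] with x hx
  rw [zero_add] at hx
  have hasSum_deriv : HasSum (fun n => x ^ n • (n + 1) • p.coeff (n + 1)) (deriv f x) := by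
    simpa [FormalMultilinearSeries.derivSeries_coeff_one] using
      (ContinuousLinearMap.apply 𝕜 E (1 : 𝕜)).hasSum hx
  rw [← hasSum_nat_add_iff' 1]
  convert hasSum_deriv.const_smul x using 2 with n
  · simp only [pow_succ', smul_smul, ← Nat.cast_smul_eq_nsmul 𝕜, mul_assoc]
  · simp

end PowerSeries

section BriotBouquet

lemma exists_norm_resolvent_natCast_le {𝕜 A : Type*} [RCLike 𝕜] [NormedRing A]
    [NormedAlgebra 𝕜 A] [CompleteSpace A] (a : A) :
    ∃ C : ℝ, 0 < C ∧ ∀ k : ℕ, k ≠ 0 → ‖resolvent a (k : 𝕜)‖ ≤ C / k := by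
  have isBigO := (spectrum.resolvent_isBigO_inv (𝕜 := 𝕜) a).comp_tendsto
    (tendsto_natCast_atTop_cobounded (α := 𝕜))
  obtain ⟨C, hC, norm_le⟩ := Asymptotics.bound_of_isBigO_nat_atTop isBigO
  refine ⟨C, hC, fun k hk => ?_⟩
  simpa [div_eq_mul_inv] using norm_le (x := k) (by simpa using hk)

variable {𝕜 : Type*} [RCLike 𝕜] {E : Type*} [NormedAddCommGroup E] [NormedSpace 𝕜 E]

/-- The Taylor coefficients at `0` of the solution of `x f' = L f + B(f, f)` with `f(0) = 0` and
`f'(0) = v`, obtained by comparing coefficients. The `n`-th coefficient is the resolvent of `L` at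
`n` applied to the part of `B(f, f)` that involves only coefficients of index `1, …, n - 1`. -/
noncomputable def briotBouquetCoeff (L : E →L[𝕜] E) (B : E →L[𝕜] E →L[𝕜] E) (v : E) : ℕ → E
  | 0 => 0
  | 1 => v
  | n + 2 => resolvent L ((n + 2 : ℕ) : 𝕜) (∑ ij ∈ (antidiagonal n).attach,
      have := Finset.HasAntidiagonal.antidiagonal.fst_le ij.2
      have := Finset.HasAntidiagonal.antidiagonal.snd_le ij.2
      B (briotBouquetCoeff L B v (ij.1.1 + 1)) (briotBouquetCoeff L B v (ij.1.2 + 1)))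

variable {L : E →L[𝕜] E} {B : E →L[𝕜] E →L[𝕜] E} {v : E}

lemma briotBouquetCoeff_add_two (n : ℕ) :
    briotBouquetCoeff L B v (n + 2) =
      resolvent L ((n + 2 : ℕ) : 𝕜) (∑ ij ∈ antidiagonal n,
        B (briotBouquetCoeff L B v (ij.1 + 1)) (briotBouquetCoeff L B v (ij.2 + 1))) := by
  rw [briotBouquetCoeff, Finset.sum_attach (antidiagonal n) fun ij =>
    B (briotBouquetCoeff L B v (ij.1 + 1)) (briotBouquetCoeff L B v (ij.2 + 1))]

lemma smul_resolvent_apply_sub {k : 𝕜} (hk : k ∉ spectrum 𝕜 L) (y : E) :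
    k • resolvent L k y - L (resolvent L k y) = y := by
  have mul_resolvent : (algebraMap 𝕜 (E →L[𝕜] E) k - L) * resolvent L k = 1 :=
    Ring.mul_inverse_cancel _ (spectrum.notMem_iff.1 hk)
  simpa [Algebra.algebraMap_eq_smul_one] using DFunLike.congr_fun mul_resolvent y

lemma natCast_smul_briotBouquetCoeff (hL : ∀ k : ℕ, 2 ≤ k → (k : 𝕜) ∉ spectrum 𝕜 L)
    (hv : L v = v) (n : ℕ) :
    (n : 𝕜) • briotBouquetCoeff L B v n = L (briotBouquetCoeff L B v n) +
      ∑ ij ∈ antidiagonal n,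
        B (briotBouquetCoeff L B v ij.1) (briotBouquetCoeff L B v ij.2) := by
  rcases n with _ | _ | n
  · simp [briotBouquetCoeff]
  · simp [briotBouquetCoeff, hv, Finset.Nat.antidiagonal_succ]
  · have sum_eq : ∑ ij ∈ antidiagonal (n + 2),
          B (briotBouquetCoeff L B v ij.1) (briotBouquetCoeff L B v ij.2) =
        ∑ ij ∈ antidiagonal n,
          B (briotBouquetCoeff L B v (ij.1 + 1)) (briotBouquetCoeff L B v (ij.2 + 1)) := by
      simp [Finset.Nat.antidiagonal_succ_succ', briotBouquetCoeff]
    rw [sum_eq, ← sub_eq_iff_eq_add', briotBouquetCoeff_add_two]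
    exact smul_resolvent_apply_sub (hL (n + 2) (by omega)) _

lemma norm_briotBouquetCoeff_le {C c M : ℝ}
    (hC : ∀ k : ℕ, k ≠ 0 → ‖resolvent L (k : 𝕜)‖ ≤ C / k) (hc : 0 ≤ c) (hM : 0 ≤ M)
    (hBc : C * ‖B‖ * c ≤ 1) (hv : ‖v‖ ≤ c * M) (n : ℕ) :
    ‖briotBouquetCoeff L B v n‖ ≤ c * M ^ n := by
  have hC_nonneg : 0 ≤ C := by simpa using (norm_nonneg _).trans (hC 1 one_ne_zero)
  induction n using Nat.strong_induction_on with
  | h n ih =>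
    rcases n with _ | _ | n
    · simpa [briotBouquetCoeff] using hc
    · simpa [briotBouquetCoeff] using hv
    have norm_term_le (ij : ℕ × ℕ) (hij : ij ∈ antidiagonal n) :
        ‖B (briotBouquetCoeff L B v (ij.1 + 1)) (briotBouquetCoeff L B v (ij.2 + 1))‖ ≤
          ‖B‖ * c * c * M ^ (n + 2) := by
      have hij' := Finset.HasAntidiagonal.mem_antidiagonal.1 hij
      calc _ ≤ ‖B‖ * (c * M ^ (ij.1 + 1)) * (c * M ^ (ij.2 + 1)) :=
            B.le_of_opNorm₂_le_of_le le_rfl (ih _ (by omega)) (ih _ (by omega))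
        _ = ‖B‖ * c * c * M ^ (n + 2) := by rw [← hij']; ring
    calc ‖briotBouquetCoeff L B v (n + 2)‖
        ≤ C / (n + 2 : ℕ) * ((n + 1) * (‖B‖ * c * c * M ^ (n + 2))) := by
          rw [briotBouquetCoeff_add_two]
          refine ContinuousLinearMap.le_of_opNorm_le_of_le _ (hC _ (by omega)) ?_
          refine (norm_sum_le_of_le _ norm_term_le).trans_eq ?_
          simp
      _ = (n + 1) / (n + 2) * (C * ‖B‖ * c) * (c * M ^ (n + 2)) := by push_cast; ring
      _ ≤ 1 * 1 * (c * M ^ (n + 2)) := by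
          gcongr
          exact div_le_one_of_le₀ (by linarith) (by positivity)
      _ = c * M ^ (n + 2) := by ring

lemma smul_deriv_pow_smul {u : 𝕜 → E} {x : 𝕜} (hu : DifferentiableAt 𝕜 u x) (k : ℕ) :
    x • deriv (fun y => y ^ k • u y) x = x ^ k • ((k : 𝕜) • u x + x • deriv u x) := by
  rw [deriv_fun_smul (by fun_prop) hu]
  rcases k with _ | k
  · simp
  · rw [deriv_pow_field, Nat.add_sub_cancel, pow_succ']
    module

lemma two_le_of_eventuallyEq_pow_smul {d u : 𝕜 → E} {k : ℕ} (hd : d 0 = 0) (hd' : deriv d 0 = 0)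
    (hu : DifferentiableAt 𝕜 u 0) (hu0 : u 0 ≠ 0) (hdu : d =ᶠ[𝓝 0] fun x => x ^ k • u x) :
    2 ≤ k := by
  have deriv_eq := hdu.deriv_eq
  have eq_zero := hdu.eq_of_nhds
  by_contra! k_lt_two
  interval_cases k
  · exact hu0 (by simpa [hd] using eq_zero.symm)
  · rw [hd', deriv_fun_smul (by fun_prop) hu] at deriv_eq
    exact hu0 (by simpa using deriv_eq.symm)

lemma eq_zero_of_smul_eq {k : 𝕜} (hk : k ∉ spectrum 𝕜 L) {y : E} (hy : k • y = L y) :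
    y = 0 := by
  have resolvent_mul : resolvent L k * (algebraMap 𝕜 (E →L[𝕜] E) k - L) = 1 :=
    Ring.inverse_mul_cancel _ (spectrum.notMem_iff.1 hk)
  simpa [Algebra.algebraMap_eq_smul_one, hy] using (DFunLike.congr_fun resolvent_mul y).symm

variable [CompleteSpace E]

variable (B) in
theorem exists_analyticAt_smul_deriv_eq (hL : ∀ k : ℕ, 2 ≤ k → (k : 𝕜) ∉ spectrum 𝕜 L)
    (hv : L v = v) :
    ∃ f : 𝕜 → E, AnalyticAt 𝕜 f 0 ∧ f 0 = 0 ∧ deriv f 0 = v ∧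
      ∀ᶠ x in 𝓝 0, x • deriv f x = L (f x) + B (f x) (f x) := by
  obtain ⟨C, hC_pos, hC⟩ := exists_norm_resolvent_natCast_le (𝕜 := 𝕜) L
  let c := (C * ‖B‖ + 1)⁻¹
  have hc : 0 < c := by positivity
  have hBc : C * ‖B‖ * c ≤ 1 := by
    rw [← div_eq_mul_inv]
    exact div_le_one_of_le₀ (by linarith) (by positivity)
  have hM : ‖v‖ ≤ c * (‖v‖ / c + 1) := by
    rw [mul_add, mul_div_cancel₀ _ hc.ne']
    linarith
  obtain ⟨f, p, hf, coeff_eq⟩ := exists_hasFPowerSeriesAt_zero_of_norm_coeff_le (𝕜 := 𝕜)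
    (by positivity) (norm_briotBouquetCoeff_le hC hc.le (by positivity) hBc hM)
  refine ⟨f, hf.analyticAt, ?_, ?_, ?_⟩
  · simpa [briotBouquetCoeff] using (hf.coeff_zero 1).symm.trans (coeff_eq 0)
  · simpa [briotBouquetCoeff] using hf.deriv.trans (coeff_eq 1)
  · filter_upwards [hasFPowerSeriesAt_iff.1 hf, eventually_hasSum_smul_deriv hf,
      eventually_hasSum_bilinear_coeff B hf hf] with x hfx hdx hBx
    rw [zero_add] at hfx
    refine hdx.unique ?_
    convert (L.hasSum hfx).add hBx using 2 with n
    simp only [coeff_eq]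
    rw [natCast_smul_briotBouquetCoeff hL hv, smul_add, map_smul]

/- Otherwise the lowest-order coefficient of `d` would be an eigenvector of `L` whose eigenvalue
is the order of vanishing of `d`. -/
lemma eventually_eq_zero_of_smul_deriv_eq (hL : ∀ k : ℕ, 2 ≤ k → (k : 𝕜) ∉ spectrum 𝕜 L)
    {d : 𝕜 → E} {M : 𝕜 → E →L[𝕜] E} (hd : AnalyticAt 𝕜 d 0) (hd0 : d 0 = 0) (hd'0 : deriv d 0 = 0)
    (hM : ContinuousAt M 0) (hM0 : M 0 = 0)
    (hd_eq : ∀ᶠ x in 𝓝 0, x • deriv d x = L (d x) + M x (d x)) :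
    ∀ᶠ x in 𝓝 0, d x = 0 := by
  by_contra not_eventually
  obtain ⟨k, u, hu, hu0, hdu⟩ := hd.exists_eventuallyEq_pow_smul_nonzero_iff.2 not_eventually
  replace hdu : d =ᶠ[𝓝 0] fun x => x ^ k • u x := by
    simpa only [sub_zero, EventuallyEq] using hdu
  have quotient_eq : (fun x => (k : 𝕜) • u x + x • deriv u x) =ᶠ[𝓝[≠] 0]
      fun x => L (u x) + M x (u x) := by
    filter_upwards [self_mem_nhdsWithin, hdu.eventuallyEq_nhds.filter_mono nhdsWithin_le_nhds,
      hd_eq.filter_mono nhdsWithin_le_nhds,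
      hu.eventually_analyticAt.filter_mono nhdsWithin_le_nhds] with x hx hdx hdx_eq hux
    refine smul_right_injective E (pow_ne_zero k hx) ?_
    calc x ^ k • ((k : 𝕜) • u x + x • deriv u x) = x • deriv d x := by
          rw [hdx.deriv_eq, smul_deriv_pow_smul hux.differentiableAt]
      _ = x ^ k • (L (u x) + M x (u x)) := by
          rw [hdx_eq, hdx.eq_of_nhds, map_smul, map_smul, smul_add]
  have eigenvector : (k : 𝕜) • u 0 = L (u 0) := by
    have hu_cont := hu.continuousAt
    have hu'_cont := hu.deriv.continuousAt
    simpa [hM0] using ((ContinuousAt.eventuallyEq_nhds_iff_eventuallyEq_nhdsNE (by fun_prop)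
      (by fun_prop)).1 quotient_eq).eq_of_nhds
  have two_le : 2 ≤ k :=
    two_le_of_eventuallyEq_pow_smul hd0 hd'0 hu.differentiableAt hu0 hdu
  exact hu0 (eq_zero_of_smul_eq (hL k two_le) eigenvector)

theorem eventuallyEq_of_smul_deriv_eq (hL : ∀ k : ℕ, 2 ≤ k → (k : 𝕜) ∉ spectrum 𝕜 L) {f g : 𝕜 → E}
    (hf : AnalyticAt 𝕜 f 0) (hg : AnalyticAt 𝕜 g 0) (hf0 : f 0 = 0) (hg0 : g 0 = 0)
    (hfg : deriv f 0 = deriv g 0)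
    (hf_eq : ∀ᶠ x in 𝓝 0, x • deriv f x = L (f x) + B (f x) (f x))
    (hg_eq : ∀ᶠ x in 𝓝 0, x • deriv g x = L (g x) + B (g x) (g x)) :
    f =ᶠ[𝓝 0] g := by
  have hf_cont := hf.continuousAt
  have hg_cont := hg.continuousAt
  suffices ∀ᶠ x in 𝓝 0, (f - g) x = 0 from this.mono fun x hx => sub_eq_zero.1 hx
  refine eventually_eq_zero_of_smul_deriv_eq hL (M := fun x => B.flip (f x) + B (g x))
    (hf.sub hg) (by simp [hf0, hg0]) ?_ (by fun_prop) (by simp [hf0, hg0]) ?_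
  · rw [deriv_sub hf.differentiableAt hg.differentiableAt, hfg, sub_self]
  · filter_upwards [hf_eq, hg_eq, hf.eventually_analyticAt, hg.eventually_analyticAt]
      with x hfx hgx hf_an hg_an
    rw [deriv_sub hf_an.differentiableAt hg_an.differentiableAt, smul_sub, hfx, hgx]
    simp only [Pi.sub_apply, map_sub, add_apply, ContinuousLinearMap.flip_apply]
    abel

end BriotBouquet

section ProdDeriv

variable {𝕜 : Type*} [NontriviallyNormedField 𝕜]
  {E : Type*} [NormedAddCommGroup E] [NormedSpace 𝕜 E]
  {F : Type*} [NormedAddCommGroup F] [NormedSpace 𝕜 F]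

lemma hasDerivAt_fst_comp {f : 𝕜 → E × F} {f' : E × F} {x : 𝕜} (hf : HasDerivAt f f' x) :
    HasDerivAt (fun y => (f y).1) f'.1 x :=
  (ContinuousLinearMap.fst 𝕜 E F).hasFDerivAt.comp_hasDerivAt x hf

lemma hasDerivAt_snd_comp {f : 𝕜 → E × F} {f' : E × F} {x : 𝕜} (hf : HasDerivAt f f' x) :
    HasDerivAt (fun y => (f y).2) f'.2 x :=
  (ContinuousLinearMap.snd 𝕜 E F).hasFDerivAt.comp_hasDerivAt x hf

end ProdDeriv

section QuadraticODE

variable {𝕜 : Type*} [RCLike 𝕜] {E : Type*} [NormedAddCommGroup E] [NormedSpace 𝕜 E]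

lemma natCast_notMem_spectrum_one {k : ℕ} (hk : 2 ≤ k) :
    (k : 𝕜) ∉ spectrum 𝕜 (1 : E →L[𝕜] E) := by
  rw [spectrum.notMem_iff, ← map_one (algebraMap 𝕜 (E →L[𝕜] E)), ← map_sub]
  exact (IsUnit.mk0 _ (sub_ne_zero.2 (by norm_cast; omega))).map _

variable [CompleteSpace E]

/- `f' = B(f, f)` is equivalent to `x g' = g + B(g, g)` for `g = x f`. -/
lemma exists_analyticAt_deriv_eq_bilinear (B : E →L[𝕜] E →L[𝕜] E) (v : E) :
    ∃ f : 𝕜 → E, AnalyticAt 𝕜 f 0 ∧ f 0 = v ∧ ∀ᶠ x in 𝓝 0, deriv f x = B (f x) (f x) := by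
  obtain ⟨g, hg, hg0, hg'0, hg_eq⟩ :=
    exists_analyticAt_smul_deriv_eq B (fun _ => natCast_notMem_spectrum_one) (v := v) rfl
  have hf : AnalyticAt 𝕜 (dslope g 0) 0 := by
    obtain ⟨p, hp⟩ := hg
    exact hp.has_fpower_series_dslope_fslope.analyticAt
  have g_eq : g = fun x => x • dslope g 0 x := by
    ext x
    simpa [hg0] using (sub_smul_dslope g 0 x).symm
  refine ⟨dslope g 0, hf, by rw [dslope_same, hg'0], ?_⟩
  have hf_cont := hf.continuousAt
  have hf'_cont := hf.deriv.continuousAt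
  refine (ContinuousAt.eventuallyEq_nhds_iff_eventuallyEq_nhdsNE (by fun_prop) (by fun_prop)).1 ?_
  filter_upwards [self_mem_nhdsWithin, hg_eq.filter_mono nhdsWithin_le_nhds,
    hf.eventually_analyticAt.filter_mono nhdsWithin_le_nhds] with x hx hgx hfx
  have g_apply : g x = x • dslope g 0 x := congrFun g_eq x
  have deriv_g : deriv g x = x • deriv (dslope g 0) x + dslope g 0 x := by
    conv_lhs => rw [g_eq]
    simpa using deriv_fun_smul differentiableAt_fun_id hfx.differentiableAt
  have smul_eq : (x * x) • deriv (dslope g 0) x = (x * x) • B (dslope g 0 x) (dslope g 0 x) := by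
    simpa [mul_smul, deriv_g, g_apply, add_comm] using hgx
  exact smul_right_injective E (mul_ne_zero hx hx) smul_eq

lemma eventually_eq_of_eventually_deriv_eq_zero {f : 𝕜 → E} {x : 𝕜} (hf : AnalyticAt 𝕜 f x)
    (hf' : ∀ᶠ y in 𝓝 x, deriv f y = 0) : ∀ᶠ y in 𝓝 x, f y = f x := by
  obtain ⟨r, hr, hball⟩ := Metric.eventually_nhds_iff_ball.1 (hf'.and hf.eventually_analyticAt)
  filter_upwards [Metric.ball_mem_nhds x hr] with y hy
  exact Metric.isOpen_ball.is_const_of_deriv_eq_zero (Metric.isPreconnected_ball)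
    (fun z hz => (hball z hz).2.differentiableAt.differentiableWithinAt)
    (fun z hz => (hball z hz).1) hy (Metric.mem_ball_self hr)

/- The linear term is absorbed into the quadratic one by adjoining the constant coordinate `1`. -/
lemma exists_analyticAt_deriv_eq_quadratic (L : E →L[𝕜] E) (B : E →L[𝕜] E →L[𝕜] E) (v : E) :
    ∃ f : 𝕜 → E, AnalyticAt 𝕜 f 0 ∧ f 0 = v ∧
      ∀ᶠ x in 𝓝 0, deriv f x = L (f x) + B (f x) (f x) := by
  let Q : E × 𝕜 →L[𝕜] E × 𝕜 →L[𝕜] E × 𝕜 :=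
    (ContinuousLinearMap.inl 𝕜 E 𝕜).postcomp (E × 𝕜) ∘L
      (ContinuousLinearMap.fst 𝕜 E 𝕜).precomp E ∘L
        ((ContinuousLinearMap.snd 𝕜 E 𝕜).smulRight L + B ∘L ContinuousLinearMap.fst 𝕜 E 𝕜)
  have Q_apply (p q : E × 𝕜) : Q p q = (p.2 • L q.1 + B p.1 q.1, 0) := rfl
  obtain ⟨f, hf, hf0, hf_eq⟩ := exists_analyticAt_deriv_eq_bilinear Q (v, 1)
  have hasDerivAt : ∀ᶠ x in 𝓝 0, HasDerivAt f (Q (f x) (f x)) x := by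
    filter_upwards [hf_eq, hf.eventually_analyticAt] with x hx hfx
    exact hx ▸ hfx.differentiableAt.hasDerivAt
  have snd_eq_one : ∀ᶠ x in 𝓝 0, (f x).2 = 1 := by
    have snd_deriv : ∀ᶠ x in 𝓝 0, deriv (fun y => (f y).2) x = 0 :=
      hasDerivAt.mono fun x hx => (hasDerivAt_snd_comp hx).deriv
    simpa [hf0] using eventually_eq_of_eventually_deriv_eq_zero
      (analyticAt_snd.fun_comp hf) snd_deriv
  refine ⟨fun x => (f x).1, analyticAt_fst.fun_comp hf, by simp only [hf0], ?_⟩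
  filter_upwards [hasDerivAt, snd_eq_one] with x hx hx1
  simpa [Q_apply, hx1] using (hasDerivAt_fst_comp hx).deriv

end QuadraticODE

section IntegralCurve

variable {E : Type*} [NormedAddCommGroup E] [NormedSpace ℝ E]

lemma eventuallyEq_of_hasDerivAt_of_contDiffAt {v : E → E} {f g : ℝ → E} {t : ℝ}
    (hv : ContDiffAt ℝ 1 v (f t)) (hf : ∀ᶠ s in 𝓝 t, HasDerivAt f (v (f s)) s)
    (hg : ∀ᶠ s in 𝓝 t, HasDerivAt g (v (g s)) s) (hfg : f t = g t) : f =ᶠ[𝓝 t] g := by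
  obtain ⟨K, s, hs, hK⟩ := hv.exists_lipschitzOnWith
  have hf_mem := hf.self_of_nhds.continuousAt.eventually_mem hs
  have hg_mem := hg.self_of_nhds.continuousAt.eventually_mem (hfg ▸ hs)
  exact ODE_solution_unique_of_eventually (v := fun _ => v) (s := fun _ => s)
    (.of_forall fun _ => hK) (hf.and hf_mem) (hg.and hg_mem) hfg

lemma contDiff_quadratic (L : E →L[ℝ] E) (B : E →L[ℝ] E →L[ℝ] E) {n : WithTop ℕ∞} :
    ContDiff ℝ n fun x => L x + B x x := by
  fun_prop

theorem analyticAt_of_hasDerivAt_quadratic [CompleteSpace E] {L : E →L[ℝ] E}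
    {B : E →L[ℝ] E →L[ℝ] E} {u : ℝ → E} {t : ℝ}
    (hu : ∀ᶠ s in 𝓝 t, HasDerivAt u (L (u s) + B (u s) (u s)) s) : AnalyticAt ℝ u t := by
  obtain ⟨f, hf, hf0, hf_eq⟩ := exists_analyticAt_deriv_eq_quadratic L B (u t)
  have sub_tendsto : Tendsto (fun s => s - t) (𝓝 t) (𝓝 0) := by
    simpa using (continuous_sub_right t).tendsto t
  have hg : ∀ᶠ s in 𝓝 t, HasDerivAt (fun s => f (s - t))
      (L (f (s - t)) + B (f (s - t)) (f (s - t))) s := by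
    filter_upwards [sub_tendsto.eventually (hf_eq.and hf.eventually_analyticAt)] with s hs
    exact (hs.1 ▸ hs.2.differentiableAt.hasDerivAt).comp_sub_const s t
  have u_eq : u =ᶠ[𝓝 t] fun s => f (s - t) :=
    eventuallyEq_of_hasDerivAt_of_contDiffAt (contDiff_quadratic L B).contDiffAt hu hg
      (by simp [hf0])
  have hf' : AnalyticAt ℝ f (t - t) := by rwa [sub_self]
  exact (hf'.fun_comp_of_eq (f := fun s => s - t) (by fun_prop) rfl).congr u_eq.symm

end IntegralCurve

section Continuation

variable {E : Type*} [NormedAddCommGroup E] [NormedSpace ℝ E] {v : E → E}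

lemma eqOn_of_hasDerivAt_of_contDiff (hv : ContDiff ℝ 1 v) {s : Set ℝ} (hs : IsPreconnected s)
    (hs_open : IsOpen s) {f g : ℝ → E} (hf : ∀ t ∈ s, HasDerivAt f (v (f t)) t)
    (hg : ∀ t ∈ s, HasDerivAt g (v (g t)) t) {t₀ : ℝ} (ht₀ : t₀ ∈ s) (hfg : f t₀ = g t₀) :
    EqOn f g s := by
  have eventuallyEq_of_eq {t : ℝ} (ht : t ∈ s) (hfgt : f t = g t) : f =ᶠ[𝓝 t] g :=
    eventuallyEq_of_hasDerivAt_of_contDiffAt hv.contDiffAt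
      ((hs_open.eventually_mem ht).mono hf) ((hs_open.eventually_mem ht).mono hg) hfgt
  have subset_coincidence : s ⊆ {t | f =ᶠ[𝓝 t] g} := by
    refine hs.subset_of_closure_inter_subset isOpen_setOfPred_eventually_nhds
      ⟨t₀, ht₀, eventuallyEq_of_eq ht₀ hfg⟩ fun t ht => eventuallyEq_of_eq ht.2 ?_
    refine tendsto_nhds_unique_of_frequently_eq (hf t ht.2).continuousAt (hg t ht.2).continuousAt ?_
    exact (mem_closure_iff_frequently.1 ht.1).mono fun y hy => hy.eq_of_nhds
  exact fun t ht => (subset_coincidence ht).eq_of_nhds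

lemma exists_extension_of_frequently_mem_isCompact [CompleteSpace E] (hv : ContDiff ℝ 1 v)
    {u : ℝ → E} {T : ℝ} (hu : ∀ t < T, HasDerivAt u (v (u t)) t) {K : Set E} (hK : IsCompact K)
    (hu_mem : ∃ᶠ t in 𝓝[<] T, u t ∈ K) :
    ∃ T' > T, ∃ w : ℝ → E, (∀ t < T', HasDerivAt w (v (w t)) t) ∧ EqOn w u (Iio T) := by
  obtain ⟨x, -, hx⟩ := hK.exists_mapClusterPt_of_frequently hu_mem
  obtain ⟨r, hr, ε, hε, flow⟩ :=
    hv.contDiffAt.exists_forall_mem_closedBall_exists_eq_forall_mem_Ioo_hasDerivAt (x₀ := x) 0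
  obtain ⟨s, hs_mem, hs⟩ := ((hx.frequently (Metric.closedBall_mem_nhds x hr)).and_eventually
    (Ioo_mem_nhdsLT (sub_lt_self T hε))).exists
  obtain ⟨α, hα0, hα⟩ := flow (u s) hs_mem
  have hβ (t : ℝ) (ht : t ∈ Ioo (s - ε) (s + ε)) :
      HasDerivAt (fun t => α (t - s)) (v (α (t - s))) t :=
    (hα (t - s) ⟨by linarith [ht.1], by linarith [ht.2]⟩).comp_sub_const t s
  have β_eq : EqOn (fun t => α (t - s)) u (Ioo (s - ε) T) :=
    eqOn_of_hasDerivAt_of_contDiff hv isPreconnected_Ioo isOpen_Ioo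
      (fun t ht => hβ t ⟨ht.1, by linarith [ht.2, hs.1]⟩) (fun t ht => hu t ht.2)
      (t₀ := s) ⟨by linarith, hs.2⟩ (by simp [hα0])
  let w : ℝ → E := fun t => if t < T then u t else α (t - s)
  have w_eq_u : EqOn w u (Iio T) := fun t ht => if_pos ht
  have w_eq_β : EqOn w (fun t => α (t - s)) (Ioo (s - ε) (s + ε)) := fun t ht => by
    by_cases htT : t < T
    · exact (w_eq_u htT).trans (β_eq ⟨ht.1, htT⟩).symm
    · exact if_neg htT
  refine ⟨s + ε, by linarith [hs.1], w, fun t ht => ?_, w_eq_u⟩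
  by_cases htT : t < T
  · rw [w_eq_u htT]
    exact (hu t htT).congr_of_eventuallyEq (w_eq_u.eventuallyEq_of_mem (Iio_mem_nhds htT))
  · have ht' : t ∈ Ioo (s - ε) (s + ε) := ⟨by linarith [hs.2], ht⟩
    rw [w_eq_β ht']
    exact (hβ t ht').congr_of_eventuallyEq
      (w_eq_β.eventuallyEq_of_mem (Ioo_mem_nhds ht'.1 ht'.2))

/-- `w` is an integral curve of `v` on `(-∞, T)` that extends `u` restricted to `(-∞, t₁)`. -/
structure IsExtensionUpTo (v : E → E) (u : ℝ → E) (t₁ T : ℝ) (w : ℝ → E) : Prop where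
  hasDerivAt : ∀ t < T, HasDerivAt w (v (w t)) t
  eqOn : EqOn w u (Iio t₁)

variable {u : ℝ → E} {t₁ : ℝ}

lemma exists_isExtensionUpTo_of_mem (hv : ContDiff ℝ 1 v) {S : Set ℝ}
    (hS_le : ∀ T ∈ S, t₁ ≤ T) (hS_ext : ∀ T ∈ S, ∃ w, IsExtensionUpTo v u t₁ T w) :
    ∃ w, ∀ T ∈ S, IsExtensionUpTo v u t₁ T w := by
  choose! w hw using hS_ext
  have base_lt {T : ℝ} (hT : T ∈ S) : t₁ - 1 < T := (sub_one_lt t₁).trans_le (hS_le T hT)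
  have w_eq_w {T T' t : ℝ} (hT : T ∈ S) (hT' : T' ∈ S) (ht : t < T) (ht' : t < T') :
      w T t = w T' t :=
    eqOn_of_hasDerivAt_of_contDiff hv isPreconnected_Iio (isOpen_Iio (a := min T T'))
      (fun s hs => (hw T hT).hasDerivAt s (lt_min_iff.1 hs).1)
      (fun s hs => (hw T' hT').hasDerivAt s (lt_min_iff.1 hs).2)
      (t₀ := t₁ - 1) (lt_min (base_lt hT) (base_lt hT'))
      (((hw T hT).eqOn (sub_one_lt t₁)).trans ((hw T' hT').eqOn (sub_one_lt t₁)).symm)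
      (lt_min ht ht')
  choose! τ hτ using fun (t : ℝ) (ht : ∃ T ∈ S, t < T) => ht
  have glued_eq {T : ℝ} (hT : T ∈ S) : EqOn (fun t => w (τ t) t) (w T) (Iio T) := fun t ht =>
    w_eq_w (hτ t ⟨T, hT, ht⟩).1 hT (hτ t ⟨T, hT, ht⟩).2 ht
  refine ⟨fun t => w (τ t) t, fun T hT => ⟨fun t ht => ?_, fun t ht => ?_⟩⟩
  · have hderiv := (hw T hT).hasDerivAt t ht
    rw [← glued_eq hT ht] at hderiv
    exact hderiv.congr_of_eventuallyEq ((glued_eq hT).eventuallyEq_of_mem (Iio_mem_nhds ht))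
  · exact (glued_eq hT (lt_of_lt_of_le ht (hS_le T hT))).trans ((hw T hT).eqOn ht)

theorem exists_global_extension [CompleteSpace E] (hv : ContDiff ℝ 1 v)
    (hu : ∀ t < t₁, HasDerivAt u (v (u t)) t)
    (recurrent : ∀ T w, t₁ ≤ T → IsExtensionUpTo v u t₁ T w →
      ∃ K, IsCompact K ∧ ∃ᶠ t in 𝓝[<] T, w t ∈ K) :
    ∃ w : ℝ → E, (∀ t, HasDerivAt w (v (w t)) t) ∧ EqOn w u (Iio t₁) := by
  let S := {T | t₁ ≤ T ∧ ∃ w, IsExtensionUpTo v u t₁ T w}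
  have t₁_mem : t₁ ∈ S := ⟨le_rfl, u, hu, eqOn_refl u _⟩
  obtain ⟨w, hw⟩ := exists_isExtensionUpTo_of_mem hv (fun T hT => hT.1) fun T (hT : T ∈ S) => hT.2
  by_cases hS : BddAbove S
  · have le_sSup : t₁ ≤ sSup S := le_csSup hS t₁_mem
    have hw_sSup : IsExtensionUpTo v u t₁ (sSup S) w := by
      refine ⟨fun t ht => ?_, (hw t₁ t₁_mem).eqOn⟩
      obtain ⟨T, hT, htT⟩ := exists_lt_of_lt_csSup ⟨t₁, t₁_mem⟩ ht
      exact (hw T hT).hasDerivAt t htT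
    obtain ⟨K, hK, hw_mem⟩ := recurrent _ w le_sSup hw_sSup
    obtain ⟨T', hT', w', hw', w'_eq⟩ :=
      exists_extension_of_frequently_mem_isCompact hv hw_sSup.hasDerivAt hK hw_mem
    have T'_mem : T' ∈ S := ⟨le_sSup.trans hT'.le, w', hw',
      (w'_eq.mono (Iio_subset_Iio le_sSup)).trans hw_sSup.eqOn⟩
    exact absurd (le_csSup hS T'_mem) hT'.not_ge
  · refine ⟨w, fun t => ?_, (hw t₁ t₁_mem).eqOn⟩
    obtain ⟨T, hT, htT⟩ := not_bddAbove_iff.1 hS t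
    exact (hw T hT).hasDerivAt t htT

end Continuation

section ScalarODE

lemma eq_mul_exp_integral_of_hasDerivAt {a y : ℝ → ℝ} {s : Set ℝ} (hs : IsOpen s)
    (hs_conn : IsPreconnected s) (ha : ContinuousOn a s)
    (hy : ∀ t ∈ s, HasDerivAt y (a t * y t) t) {t₀ t : ℝ} (ht₀ : t₀ ∈ s) (ht : t ∈ s) :
    y t = y t₀ * Real.exp (∫ τ in t₀..t, a τ) := by
  have hasDerivAt_integral {t : ℝ} (ht : t ∈ s) :
      HasDerivAt (fun t => ∫ τ in t₀..t, a τ) (a t) t :=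
    intervalIntegral.integral_hasDerivAt_right
      (ha.mono (hs_conn.ordConnected.uIcc_subset ht₀ ht)).intervalIntegrable
      (ha.stronglyMeasurableAtFilter hs t ht) (ha.continuousAt (hs.mem_nhds ht))
  have hasDerivAt_zero {t : ℝ} (ht : t ∈ s) :
      HasDerivAt (fun t => y t * Real.exp (-∫ τ in t₀..t, a τ)) 0 t :=
    ((hy t ht).mul (hasDerivAt_integral ht).neg.exp).congr_deriv (by ring)
  have const_eq : y t * Real.exp (-∫ τ in t₀..t, a τ) = y t₀ := by
    simpa using hs.is_const_of_deriv_eq_zero hs_conn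
      (fun t ht => (hasDerivAt_zero ht).differentiableAt.differentiableWithinAt)
      (fun t ht => (hasDerivAt_zero ht).deriv) ht ht₀
  rw [← const_eq, mul_assoc, ← Real.exp_add, neg_add_cancel, Real.exp_zero, mul_one]

lemma le_const_of_hasDerivAt_neg_of_eq {y y' : ℝ → ℝ} {t₀ T Y : ℝ}
    (hy : ∀ t ∈ Ico t₀ T, HasDerivAt y (y' t) t) (hy₀ : y t₀ ≤ Y)
    (hy' : ∀ t ∈ Ico t₀ T, y t = Y → y' t < 0) {t : ℝ} (ht : t ∈ Ico t₀ T) : y t ≤ Y :=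
  image_le_of_deriv_right_lt_deriv_boundary (B := fun _ => Y) (B' := fun _ => 0)
    (fun τ hτ => (hy τ ⟨hτ.1, hτ.2.trans_lt ht.2⟩).continuousAt.continuousWithinAt)
    (fun τ hτ => (hy τ ⟨hτ.1, hτ.2.trans ht.2⟩).hasDerivWithinAt) hy₀
    (fun τ => hasDerivAt_const τ Y) (fun τ hτ => hy' τ ⟨hτ.1, hτ.2.trans ht.2⟩)
    ⟨ht.1, le_rfl⟩

end ScalarODE

/-- The equation for `h` in logarithmic time: `w t = 1 / h r` and `p t = r h'(r) / (2 h r)` at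
`r = exp t`, where `m` stands for `n - 1`. -/
structure IsLogSolutionOn (m lam : ℝ) (w p : ℝ → ℝ) (s : Set ℝ) : Prop where
  hasDerivAt_w : ∀ t ∈ s, HasDerivAt w (-2 * p t * w t) t
  hasDerivAt_p : ∀ t ∈ s, HasDerivAt p
    (p t - p t ^ 2 - m / 4 * (w t - 1) - (lam * Real.exp t + m) * w t * p t / 2) t

namespace IsLogSolutionOn

variable {m lam : ℝ} {w p : ℝ → ℝ}

lemma mono {s s' : Set ℝ} (hwp : IsLogSolutionOn m lam w p s) (hs : s' ⊆ s) :
    IsLogSolutionOn m lam w p s' :=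
  ⟨fun t ht => hwp.hasDerivAt_w t (hs ht), fun t ht => hwp.hasDerivAt_p t (hs ht)⟩

lemma pos {s : Set ℝ} (hwp : IsLogSolutionOn m lam w p s) (hs : IsOpen s)
    (hs_conn : IsPreconnected s) {t₀ t : ℝ} (ht₀ : t₀ ∈ s) (hw : 0 < w t₀) (ht : t ∈ s) :
    0 < w t := by
  have p_cont : ContinuousOn p s := fun t ht =>
    (hwp.hasDerivAt_p t ht).continuousAt.continuousWithinAt
  rw [eq_mul_exp_integral_of_hasDerivAt hs hs_conn (by fun_prop) hwp.hasDerivAt_w ht₀ ht]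
  positivity

/- In the variable `r`, the monotone quantity is `(h' - λ - m / r) / (2 √h)`. -/
lemma monotoneOn_slope_quotient {s : Set ℝ} (hwp : IsLogSolutionOn m lam w p s)
    (hs : Convex ℝ s) (hm : 0 ≤ m) (hw : ∀ t ∈ s, 0 < w t) :
    MonotoneOn (fun t => (p t - (lam * Real.exp t + m) * w t / 2) / (Real.exp t * √(w t))) s := by
  have hasDerivAt_quotient (t : ℝ) (ht : t ∈ s) :
      HasDerivAt (fun t => (p t - (lam * Real.exp t + m) * w t / 2) / (Real.exp t * √(w t)))
        (m / 4 * (1 + w t) / (Real.exp t * √(w t))) t := by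
    have hwt := hw t ht
    have hw' := hwp.hasDerivAt_w t ht
    have hexp := Real.hasDerivAt_exp t
    have sqrt_pos : 0 < √(w t) := Real.sqrt_pos.2 hwt
    refine (((hwp.hasDerivAt_p t ht).sub
      ((((hexp.const_mul lam).add_const m).mul hw').div_const 2)).div
      (hexp.mul (hw'.sqrt hwt.ne')) (mul_pos (Real.exp_pos t) sqrt_pos).ne').congr_deriv ?_
    have sq_sqrt : √(w t) ^ 2 = w t := Real.sq_sqrt hwt.le
    simp only [Pi.mul_apply, Pi.sub_apply]
    generalize √(w t) = q at sq_sqrt sqrt_pos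
    rw [← sq_sqrt]
    field_simp
    ring
  refine monotoneOn_of_deriv_nonneg hs
    (fun t ht => (hasDerivAt_quotient t ht).continuousAt.continuousWithinAt)
    (fun t ht => (hasDerivAt_quotient t
      (interior_subset ht)).differentiableAt.differentiableWithinAt) fun t ht => ?_
  have hwt := hw t (interior_subset ht)
  rw [(hasDerivAt_quotient t (interior_subset ht)).deriv]
  positivity

variable {t₀ T : ℝ}

lemma exists_le_p (hwp : IsLogSolutionOn m lam w p (Ico t₀ T)) (hm : 0 ≤ m)
    (hw : ∀ t ∈ Ico t₀ T, 0 < w t) :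
    ∃ c, 0 ≤ c ∧ ∀ t ∈ Ico t₀ T, (lam * Real.exp t + m) * w t / 2 - c * √(w t) ≤ p t := by
  let q₀ := (p t₀ - (lam * Real.exp t₀ + m) * w t₀ / 2) / (Real.exp t₀ * √(w t₀))
  refine ⟨|q₀| * Real.exp T, by positivity, fun t ht => ?_⟩
  have hwt := hw t ht
  have q₀_le : q₀ ≤ (p t - (lam * Real.exp t + m) * w t / 2) / (Real.exp t * √(w t)) :=
    hwp.monotoneOn_slope_quotient (convex_Ico t₀ T) hm hw
      (left_mem_Ico.2 (ht.1.trans_lt ht.2)) ht ht.1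
  rw [le_div_iff₀ (by positivity)] at q₀_le
  have exp_le : |q₀| * (Real.exp t * √(w t)) ≤ |q₀| * (Real.exp T * √(w t)) := by
    gcongr
    exact ht.2.le
  have neg_le : -|q₀| * (Real.exp t * √(w t)) ≤ q₀ * (Real.exp t * √(w t)) := by
    gcongr
    exact neg_abs_le q₀
  linarith

lemma exists_w_le (hwp : IsLogSolutionOn m lam w p (Ico t₀ T)) (hm : 0 < m)
    (hlam : 0 ≤ lam) (hw : ∀ t ∈ Ico t₀ T, 0 < w t) : ∃ W, ∀ t ∈ Ico t₀ T, w t ≤ W := by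
  obtain ⟨c, -, le_p⟩ := hwp.exists_le_p hm.le hw
  refine ⟨max (w t₀) ((2 * c / m) ^ 2 + 1), fun t ht =>
    le_const_of_hasDerivAt_neg_of_eq hwp.hasDerivAt_w (le_max_left _ _) (fun t ht w_eq => ?_) ht⟩
  have hwt := hw t ht
  have sqrt_pos : 0 < √(w t) := Real.sqrt_pos.2 hwt
  have lt_sqrt : 2 * c / m < √(w t) :=
    Real.lt_sqrt_of_sq_lt ((lt_add_one _).trans_le (w_eq ▸ le_max_right _ _))
  have p_pos : 0 < p t :=
    calc 0 < √(w t) * (m * √(w t) / 2 - c) := by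
          rw [div_lt_iff₀ hm] at lt_sqrt
          exact mul_pos sqrt_pos (by linarith)
      _ = m * w t / 2 - c * √(w t) := by linear_combination m / 2 * Real.mul_self_sqrt hwt.le
      _ ≤ (lam * Real.exp t + m) * w t / 2 - c * √(w t) := by
          have : 0 ≤ lam * Real.exp t * w t := by positivity
          linarith
      _ ≤ p t := le_p t ht
  nlinarith [mul_pos p_pos hwt]

lemma exists_p_le (hwp : IsLogSolutionOn m lam w p (Ico t₀ T)) (hm : 0 ≤ m)
    (hlam : 0 ≤ lam) (hw : ∀ t ∈ Ico t₀ T, 0 < w t) : ∃ P, ∀ t ∈ Ico t₀ T, p t ≤ P := by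
  refine ⟨max (p t₀) (m + 2), fun t ht =>
    le_const_of_hasDerivAt_neg_of_eq hwp.hasDerivAt_p (le_max_left _ _) (fun t ht p_eq => ?_)
      ht⟩
  have hwt := hw t ht
  have le_p : m + 2 ≤ p t := p_eq ▸ le_max_right _ _
  have p_pos : 0 < p t := by linarith
  have damping_nonneg : 0 ≤ (lam * Real.exp t + m) * w t * p t / 2 := by positivity
  have source_nonneg : 0 ≤ m / 4 * w t := by positivity
  nlinarith

lemma exists_abs_le (hwp : IsLogSolutionOn m lam w p (Ico t₀ T)) (hm : 0 < m)
    (hlam : 0 ≤ lam) (hw : ∀ t ∈ Ico t₀ T, 0 < w t) :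
    ∃ R, ∀ t ∈ Ico t₀ T, |w t| ≤ R ∧ |p t| ≤ R := by
  obtain ⟨c, hc, le_p⟩ := hwp.exists_le_p hm.le hw
  obtain ⟨W, w_le⟩ := hwp.exists_w_le hm hlam hw
  obtain ⟨P, p_le⟩ := hwp.exists_p_le hm.le hlam hw
  refine ⟨max W (max P (c * √W)), fun t ht => ⟨?_, abs_le.2 ⟨?_, ?_⟩⟩⟩
  · rw [abs_of_pos (hw t ht)]
    exact (w_le t ht).trans (le_max_left _ _)
  · have hwt := hw t ht
    have sqrt_le : c * √(w t) ≤ c * √W := by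
      gcongr
      exact w_le t ht
    have linear_nonneg : 0 ≤ (lam * Real.exp t + m) * w t / 2 := by positivity
    have le_max : c * √W ≤ max W (max P (c * √W)) :=
      (le_max_right _ _).trans (le_max_right _ _)
    linarith [le_p t ht]
  · exact (p_le t ht).trans ((le_max_left _ _).trans (le_max_right _ _))

/- The derivative of `h` at `r` is `2 p(log r) h(r) / r`. -/
lemma hasDerivAt_inv_comp_log (hwp : IsLogSolutionOn m lam w p univ) (hw : ∀ t, 0 < w t) {r : ℝ}
    (hr : 0 < r) :
    HasDerivAt (fun r => (w (Real.log r))⁻¹) (2 * p (Real.log r) * (w (Real.log r))⁻¹ * r⁻¹) r := by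
  have hw_log := (hw (Real.log r)).ne'
  refine (((hwp.hasDerivAt_w _ (mem_univ _)).comp r (Real.hasDerivAt_log hr.ne')).fun_inv
    hw_log).congr_deriv ?_
  simp only [Function.comp_apply]
  field_simp

lemma inv_comp_log_satisfies_ode (hwp : IsLogSolutionOn m lam w p univ) (hw : ∀ t, 0 < w t)
    {h : ℝ → ℝ} (h_eq : EqOn h (fun r => (w (Real.log r))⁻¹) (Ioi 0)) {r : ℝ} (hr : 0 < r) :
    2 * r ^ 2 * h r * deriv (deriv h) r =
      m * h r * (h r - 1) + r * deriv h r * (r * deriv h r - lam * r - m) := by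
  have hh {r : ℝ} (hr : 0 < r) : HasDerivAt h (2 * p (Real.log r) * h r * r⁻¹) r := by
    rw [h_eq hr]
    exact (hwp.hasDerivAt_inv_comp_log hw hr).congr_of_eventuallyEq
      (h_eq.eventuallyEq_of_mem (Ioi_mem_nhds hr))
  have deriv_eq : deriv h =ᶠ[𝓝 r] fun r => 2 * p (Real.log r) * h r * r⁻¹ := by
    filter_upwards [Ioi_mem_nhds hr] with ρ hρ using (hh hρ).deriv
  have hp := (hwp.hasDerivAt_p _ (mem_univ _)).comp r (Real.hasDerivAt_log hr.ne')
  have deriv_deriv := ((((hp.const_mul 2).mul (hh hr)).mul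
    (hasDerivAt_inv hr.ne')).congr_of_eventuallyEq deriv_eq).deriv
  have hw_log := (hw (Real.log r)).ne'
  rw [deriv_deriv, (hh hr).deriv]
  simp only [Function.comp_apply, Pi.mul_apply, h_eq hr, Real.exp_log hr]
  field_simp
  ring

end IsLogSolutionOn

section LogSystem

lemma notMem_spectrum_of_forall_smul_eq {𝕜 : Type*} [NontriviallyNormedField 𝕜] [CompleteSpace 𝕜]
    {E : Type*} [NormedAddCommGroup E] [NormedSpace 𝕜 E] [FiniteDimensional 𝕜 E] {L : E →L[𝕜] E}
    {k : 𝕜} (hL : ∀ y, k • y = L y → y = 0) : k ∉ spectrum 𝕜 L := by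
  have : CompleteSpace E := FiniteDimensional.complete 𝕜 E
  have injective : Function.Injective (algebraMap 𝕜 (E →L[𝕜] E) k - L) :=
    (injective_iff_map_eq_zero _).2 fun y hy => hL y <| by
      simpa [Algebra.algebraMap_eq_smul_one, sub_eq_zero] using hy
  rw [spectrum.notMem_iff, ContinuousLinearMap.isUnit_iff_bijective]
  exact ⟨injective, LinearMap.surjective_of_injective (f := (_ : E →L[𝕜] E).toLinearMap) injective⟩

/-- The linear part of the autonomous quadratic system satisfied by
`(1 / h - 1, r / h, r h' / (2 h))` as a function of `log r`. -/
noncomputable def logSystemLinear (m : ℝ) : ℝ × ℝ × ℝ →L[ℝ] ℝ × ℝ × ℝ :=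
  LinearMap.toContinuousLinearMap
    { toFun := fun v => (-2 * v.2.2, v.2.1, (1 - m / 2) * v.2.2 - m / 4 * v.1)
      map_add' := fun v w => by ext <;> simp <;> ring
      map_smul' := fun c v => by ext <;> simp <;> ring }

/-- A bilinear map whose diagonal is the quadratic part of the autonomous system satisfied by
`(1 / h - 1, r / h, r h' / (2 h))` as a function of `log r`. -/
noncomputable def logSystemBilinear (m lam : ℝ) :
    ℝ × ℝ × ℝ →L[ℝ] ℝ × ℝ × ℝ →L[ℝ] ℝ × ℝ × ℝ :=
  LinearMap.toContinuousBilinearMap <|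
    LinearMap.mk₂ ℝ
      (fun v w => (-2 * v.1 * w.2.2, -2 * v.2.1 * w.2.2,
        -(v.2.2 * w.2.2) - (lam * v.2.1 + m * v.1) / 2 * w.2.2))
      (fun _ _ _ => by ext <;> simp <;> ring) (fun _ _ _ => by ext <;> simp <;> ring)
      (fun _ _ _ => by ext <;> simp <;> ring) (fun _ _ _ => by ext <;> simp <;> ring)

/-- The vector field of the autonomous system satisfied by `(1 / h - 1, r / h, r h' / (2 h))` as a
function of `log r`; the second coordinate removes the explicit dependence on `r`. -/
noncomputable def logField (m lam : ℝ) (v : ℝ × ℝ × ℝ) : ℝ × ℝ × ℝ :=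
  logSystemLinear m v + logSystemBilinear m lam v v

lemma logSystemLinear_apply (m : ℝ) (v : ℝ × ℝ × ℝ) :
    logSystemLinear m v = (-2 * v.2.2, v.2.1, (1 - m / 2) * v.2.2 - m / 4 * v.1) := rfl

variable {m lam : ℝ}

lemma logField_apply (v : ℝ × ℝ × ℝ) :
    logField m lam v = (-2 * v.2.2 * (1 + v.1), (1 - 2 * v.2.2) * v.2.1,
      v.2.2 - v.2.2 ^ 2 - m / 4 * v.1 - (lam * v.2.1 + m * (1 + v.1)) * v.2.2 / 2) := by
  have bilinear_apply : logSystemBilinear m lam v v = (-2 * v.1 * v.2.2, -2 * v.2.1 * v.2.2,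
      -(v.2.2 * v.2.2) - (lam * v.2.1 + m * v.1) / 2 * v.2.2) := rfl
  rw [logField, logSystemLinear_apply, bilinear_apply]
  ext <;> simp <;> ring

lemma contDiff_logField : ContDiff ℝ 1 (logField m lam) :=
  contDiff_quadratic _ _

lemma natCast_notMem_spectrum_logSystemLinear (hm : 0 ≤ m) {k : ℕ} (hk : 2 ≤ k) :
    (k : ℝ) ∉ spectrum ℝ (logSystemLinear m) := by
  refine notMem_spectrum_of_forall_smul_eq fun ⟨S, σ, p⟩ hv => ?_
  simp only [logSystemLinear_apply, Prod.smul_mk, smul_eq_mul, Prod.mk.injEq] at hv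
  obtain ⟨eq_S, eq_σ, eq_p⟩ := hv
  have two_le : (2 : ℝ) ≤ k := by exact_mod_cast hk
  have sub_one_ne : (k : ℝ) - 1 ≠ 0 := by linarith
  have σ_eq : σ = 0 := by
    refine (mul_eq_zero.1 (?_ : ((k : ℝ) - 1) * σ = 0)).resolve_left sub_one_ne
    linear_combination eq_σ
  have S_eq : S = 0 := by
    refine (mul_eq_zero.1 (?_ : ((k : ℝ) - 1) * (k + m / 2) * S = 0)).resolve_left
      (mul_ne_zero sub_one_ne (by positivity))
    linear_combination ((k : ℝ) - 1 + m / 2) * eq_S - 2 * eq_p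
  have p_eq : p = 0 := by linear_combination 1 / 2 * eq_S - k / 2 * S_eq
  simp [S_eq, σ_eq, p_eq]

lemma logSystemLinear_eigenvector (μ : ℝ) :
    logSystemLinear m (-μ, 1, μ / 2) = (-μ, 1, μ / 2) := by
  rw [logSystemLinear_apply]
  ext <;> simp <;> ring

lemma isLogSolutionOn_of_hasDerivAt {u : ℝ → ℝ × ℝ × ℝ} {s : Set ℝ}
    (hu : ∀ t ∈ s, HasDerivAt u (logField m lam (u t)) t)
    (hσ : ∀ t ∈ s, (u t).2.1 = Real.exp t * (1 + (u t).1)) :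
    IsLogSolutionOn m lam (fun t => 1 + (u t).1) (fun t => (u t).2.2) s := by
  refine ⟨fun t ht => ?_, fun t ht => ?_⟩
  · simpa [logField_apply] using (hasDerivAt_fst_comp (hu t ht)).const_add 1
  · refine (hasDerivAt_snd_comp (hasDerivAt_snd_comp (hu t ht))).congr_deriv ?_
    simp only [logField_apply, hσ t ht]
    ring

lemma snd_eq_exp_mul_of_hasDerivAt {u : ℝ → ℝ × ℝ × ℝ} {s : Set ℝ} (hs : IsOpen s)
    (hs_conn : IsPreconnected s) (hu : ∀ t ∈ s, HasDerivAt u (logField m lam (u t)) t) {t₀ t : ℝ}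
    (ht₀ : t₀ ∈ s) (hσ : (u t₀).2.1 = Real.exp t₀ * (1 + (u t₀).1)) (ht : t ∈ s) :
    (u t).2.1 = Real.exp t * (1 + (u t).1) := by
  have u_cont : ContinuousOn u s := fun t ht => (hu t ht).continuousAt.continuousWithinAt
  have hasDerivAt_defect (t : ℝ) (ht : t ∈ s) :
      HasDerivAt (fun t => (u t).2.1 - Real.exp t * (1 + (u t).1))
        ((1 - 2 * (u t).2.2) * ((u t).2.1 - Real.exp t * (1 + (u t).1))) t := by
    refine ((hasDerivAt_fst_comp (hasDerivAt_snd_comp (hu t ht))).sub ((Real.hasDerivAt_exp t).mul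
      ((hasDerivAt_fst_comp (hu t ht)).const_add 1))).congr_deriv ?_
    simp only [logField_apply]
    ring
  have defect_eq := eq_mul_exp_integral_of_hasDerivAt hs hs_conn
    (a := fun t => 1 - 2 * (u t).2.2) (by fun_prop) hasDerivAt_defect ht₀ ht
  rwa [hσ, sub_self, zero_mul, sub_eq_zero] at defect_eq

/- `r / h = r · (1 / h)`: the difference of the two sides is a solution of a scalar singular
equation that vanishes to second order at `0`. -/
lemma eventually_snd_eq_mul_of_smul_deriv_eq {f : ℝ → ℝ × ℝ × ℝ} (hf : AnalyticAt ℝ f 0)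
    (hf0 : f 0 = 0) (hf'0 : (deriv f 0).2.1 = 1)
    (hf_eq : ∀ᶠ x in 𝓝 0, x • deriv f x = logField m lam (f x)) :
    ∀ᶠ x in 𝓝 0, (f x).2.1 = x * (1 + (f x).1) := by
  have f_cont := hf.continuousAt
  have hasDerivAt_defect {x : ℝ} (hfx : AnalyticAt ℝ f x) :
      HasDerivAt (fun x => (f x).2.1 - x * (1 + (f x).1))
        ((deriv f x).2.1 - (1 + (f x).1 + x * (deriv f x).1)) x := by
    have hfx' := hfx.differentiableAt.hasDerivAt
    exact ((hasDerivAt_fst_comp (hasDerivAt_snd_comp hfx')).fun_sub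
      ((hasDerivAt_id' x).fun_mul ((hasDerivAt_fst_comp hfx').const_add 1))).congr_deriv (by ring)
  have defect_an : AnalyticAt ℝ (fun x => (f x).2.1 - x * (1 + (f x).1)) 0 :=
    (analyticAt_fst.fun_comp (analyticAt_snd.fun_comp hf)).fun_sub
      (analyticAt_id.fun_mul (analyticAt_const.fun_add (analyticAt_fst.fun_comp hf)))
  have defect_eq_zero := eventually_eq_zero_of_smul_deriv_eq (L := (1 : ℝ →L[ℝ] ℝ))
    (M := fun x => (-2 * (f x).2.2) • (1 : ℝ →L[ℝ] ℝ))
    (fun _ => natCast_notMem_spectrum_one) defect_an (by simp [hf0])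
    (by simp [(hasDerivAt_defect hf).deriv, hf0, hf'0]) (by fun_prop) (by simp [hf0]) ?_
  · exact defect_eq_zero.mono fun x hx => sub_eq_zero.1 hx
  · filter_upwards [hf_eq, hf.eventually_analyticAt] with x hx hfx
    rw [(hasDerivAt_defect hfx).deriv]
    simp only [logField_apply, Prod.ext_iff, Prod.smul_fst, Prod.smul_snd, smul_eq_mul] at hx
    obtain ⟨eq_S, eq_σ, -⟩ := hx
    simp only [smul_eq_mul, one_apply_eq_self, neg_mul, smul_apply]
    linear_combination eq_σ - x * eq_S

end LogSystem

section Existence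

variable {m lam : ℝ}

lemma exists_integralCurve_logField_comp_exp (hm : 0 ≤ m) (μ : ℝ) :
    ∃ (f : ℝ → ℝ × ℝ × ℝ) (t₁ : ℝ), AnalyticAt ℝ f 0 ∧ f 0 = 0 ∧ (deriv f 0).1 = -μ ∧
      ∀ t < t₁, HasDerivAt (fun t => f (Real.exp t)) (logField m lam (f (Real.exp t))) t ∧
        0 < 1 + (f (Real.exp t)).1 ∧
        (f (Real.exp t)).2.1 = Real.exp t * (1 + (f (Real.exp t)).1) := by
  obtain ⟨f, hf, hf0, hf'0, hf_eq⟩ := exists_analyticAt_smul_deriv_eq (logSystemBilinear m lam)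
    (fun _ => natCast_notMem_spectrum_logSystemLinear hm) (logSystemLinear_eigenvector μ)
  have hσ := eventually_snd_eq_mul_of_smul_deriv_eq hf hf0 (by rw [hf'0]) hf_eq
  have w_pos : ∀ᶠ x in 𝓝 0, 0 < 1 + (f x).1 := by
    have w_cont : ContinuousAt (fun x => 1 + (f x).1) 0 := by
      have f_cont := hf.continuousAt
      fun_prop
    exact w_cont.eventually_const_lt (by simp [hf0])
  have near_atBot := Real.tendsto_exp_atBot.eventually
    (hf_eq.and (hf.eventually_analyticAt.and (w_pos.and hσ)))
  obtain ⟨t₁, ht₁⟩ := eventually_atBot.1 near_atBot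
  refine ⟨f, t₁, hf, hf0, by rw [hf'0], fun t ht => ?_⟩
  obtain ⟨eq_f, f_an, w_pos, hσ⟩ := ht₁ t ht.le
  refine ⟨?_, w_pos, hσ⟩
  exact (f_an.differentiableAt.hasDerivAt.scomp t (Real.hasDerivAt_exp t)).congr_deriv eq_f

lemma exists_isCompact_forall_mem_of_hasDerivAt (hm : 0 < m) (hlam : 0 ≤ lam)
    {u : ℝ → ℝ × ℝ × ℝ} {t₀ T : ℝ} (hu : ∀ t < T, HasDerivAt u (logField m lam (u t)) t)
    (ht₀ : t₀ < T) (hw : 0 < 1 + (u t₀).1) (hσ : (u t₀).2.1 = Real.exp t₀ * (1 + (u t₀).1)) :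
    ∃ K, IsCompact K ∧ ∀ t ∈ Ico t₀ T, u t ∈ K := by
  have σ_eq {t : ℝ} (ht : t < T) : (u t).2.1 = Real.exp t * (1 + (u t).1) :=
    snd_eq_exp_mul_of_hasDerivAt isOpen_Iio isPreconnected_Iio hu ht₀ hσ ht
  have hwp : IsLogSolutionOn m lam (fun t => 1 + (u t).1) (fun t => (u t).2.2) (Iio T) :=
    isLogSolutionOn_of_hasDerivAt hu fun t ht => σ_eq ht
  obtain ⟨R, hR⟩ := (hwp.mono fun t ht => ht.2).exists_abs_le hm hlam
    fun t (ht : t ∈ Ico t₀ T) => hwp.pos isOpen_Iio isPreconnected_Iio ht₀ hw ht.2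
  refine ⟨Metric.closedBall 0 (R + 1) ×ˢ
    Metric.closedBall 0 (Real.exp T * R) ×ˢ Metric.closedBall 0 R,
    (isCompact_closedBall _ _).prod ((isCompact_closedBall _ _).prod (isCompact_closedBall _ _)),
    fun t ht => ?_⟩
  obtain ⟨abs_w_le, abs_p_le⟩ := hR t ht
  simp only [mem_prod, mem_closedBall_zero_iff, Real.norm_eq_abs]
  refine ⟨?_, ?_, abs_p_le⟩
  · simpa using (abs_sub (1 + (u t).1) 1).trans (add_le_add_left abs_w_le |1|)
  · rw [σ_eq ht.2, abs_mul, Real.abs_exp]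
    gcongr
    exact ht.2.le

lemma exists_global_extension_logField (hm : 0 < m) (hlam : 0 ≤ lam) {u : ℝ → ℝ × ℝ × ℝ}
    {t₁ : ℝ} (hu : ∀ t < t₁, HasDerivAt u (logField m lam (u t)) t ∧ 0 < 1 + (u t).1 ∧
      (u t).2.1 = Real.exp t * (1 + (u t).1)) :
    ∃ U : ℝ → ℝ × ℝ × ℝ, (∀ t, HasDerivAt U (logField m lam (U t)) t) ∧ EqOn U u (Iio t₁) := by
  refine exists_global_extension contDiff_logField (fun t ht => (hu t ht).1)
    fun T U hT hU => ?_
  have ht₀ : t₁ - 1 < t₁ := sub_one_lt t₁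
  obtain ⟨-, w_pos, hσ⟩ := hu _ ht₀
  rw [← hU.eqOn ht₀] at w_pos hσ
  obtain ⟨K, hK, mem_K⟩ := exists_isCompact_forall_mem_of_hasDerivAt hm hlam hU.hasDerivAt
    (ht₀.trans_le hT) w_pos hσ
  exact ⟨K, hK, (eventually_of_mem (Ico_mem_nhdsLT (ht₀.trans_le hT)) mem_K).frequently⟩

lemma exists_isLogSolutionOn_univ (hm : 0 < m) (hlam : 0 ≤ lam) (μ : ℝ) :
    ∃ w p w₀ : ℝ → ℝ, IsLogSolutionOn m lam w p univ ∧ (∀ t, 0 < w t) ∧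
      (∀ t, AnalyticAt ℝ w t) ∧ AnalyticAt ℝ w₀ 0 ∧ w₀ 0 = 1 ∧ deriv w₀ 0 = -μ ∧
      (fun r => w (Real.log r)) =ᶠ[𝓝[>] 0] w₀ := by
  obtain ⟨f, t₁, hf, hf0, hf'0, hf_curve⟩ :=
    exists_integralCurve_logField_comp_exp (lam := lam) hm.le μ
  obtain ⟨U, hU, U_eq⟩ := exists_global_extension_logField hm hlam hf_curve
  have U_eq_f {t : ℝ} (ht : t < t₁) : U t = f (Real.exp t) := U_eq ht
  have ht₀ : t₁ - 1 < t₁ := sub_one_lt t₁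
  obtain ⟨-, w_pos, hσ⟩ := hf_curve _ ht₀
  rw [← U_eq_f ht₀] at w_pos hσ
  have hwp : IsLogSolutionOn m lam (fun t => 1 + (U t).1) (fun t => (U t).2.2) univ :=
    isLogSolutionOn_of_hasDerivAt (fun t _ => hU t) fun t ht =>
      snd_eq_exp_mul_of_hasDerivAt isOpen_univ isPreconnected_univ (fun t _ => hU t)
        (mem_univ _) hσ ht
  refine ⟨_, _, fun r => 1 + (f r).1, hwp, fun t => hwp.pos isOpen_univ isPreconnected_univ
      (mem_univ _) w_pos (mem_univ t), fun t => ?_,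
    analyticAt_const.add (analyticAt_fst.fun_comp hf), by simp [hf0], ?_, ?_⟩
  · exact analyticAt_const.add (analyticAt_fst.fun_comp
      (analyticAt_of_hasDerivAt_quadratic (.of_forall hU)))
  · exact ((hasDerivAt_fst_comp hf.differentiableAt.hasDerivAt).const_add 1).deriv.trans hf'0
  · filter_upwards [Ioo_mem_nhdsGT (Real.exp_pos t₁)] with r hr
    rw [U_eq_f ((Real.log_lt_iff_lt_exp hr.1).2 hr.2), Real.exp_log hr.1]

theorem exists_isAnalyticSol {n : ℕ} {lam : ℝ} (hn : 2 ≤ n) (hlam : 0 ≤ lam) (μ₁ : ℝ) :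
    ∃ h, IsAnalyticSol n lam μ₁ h := by
  have hm : (0 : ℝ) < n - 1 := by
    rw [sub_pos]
    exact_mod_cast hn
  obtain ⟨w, p, w₀, hwp, w_pos, w_an, hw₀, w₀_zero, deriv_w₀, w_eq⟩ :=
    exists_isLogSolutionOn_univ hm hlam μ₁
  let h : ℝ → ℝ := fun r => if r ≤ 0 then (w₀ r)⁻¹ else (w (Real.log r))⁻¹
  have h_eq : EqOn h (fun r => (w (Real.log r))⁻¹) (Ioi 0) := fun r hr => if_neg hr.not_ge
  have h_eq₀ : h =ᶠ[𝓝 0] fun r => (w₀ r)⁻¹ := by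
    filter_upwards [eventually_nhdsWithin_iff.1 w_eq] with r hr
    by_cases hr0 : r ≤ 0
    · exact if_pos hr0
    · simp only [h, if_neg hr0, hr (not_le.1 hr0)]
  have h_zero : h 0 = 1 := by simp [h_eq₀.eq_of_nhds, w₀_zero]
  refine ⟨h, fun r hr => ?_, fun r hr => ⟨hwp.inv_comp_log_satisfies_ode w_pos h_eq hr, ?_⟩,
    h_zero, ?_⟩
  · rcases eq_or_lt_of_le (mem_Ici.1 hr) with rfl | hr
    · exact ((hw₀.inv (by simp [w₀_zero])).congr h_eq₀.symm).analyticWithinAt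
    · exact ((((w_an _).comp (analyticAt_log hr)).inv (w_pos _).ne').congr
        (h_eq.eventuallyEq_of_mem (Ioi_mem_nhds hr)).symm).analyticWithinAt
  · rw [h_eq hr]
    exact inv_pos.2 (w_pos _)
  · have hasDerivAt_h : HasDerivAt h μ₁ 0 :=
      ((hw₀.differentiableAt.hasDerivAt.inv (by simp [w₀_zero])).congr_of_eventuallyEq
        h_eq₀).congr_deriv (by simp [w₀_zero, deriv_w₀])
    exact hasDerivAt_h.hasDerivWithinAt.derivWithin (uniqueDiffOn_Ici 0 0 self_mem_Ici)

end Existence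

section Uniqueness

/-- The variables `(1 / h - 1, r / h, r h' / (2 h))` in which the equation for `h` becomes the
quadratic system with vector field `logField`. -/
noncomputable def logState (h : ℝ → ℝ) (r : ℝ) : ℝ × ℝ × ℝ :=
  ((h r)⁻¹ - 1, r * (h r)⁻¹, r * deriv h r / 2 * (h r)⁻¹)

variable {m lam : ℝ} {h : ℝ → ℝ} {r : ℝ}

lemma analyticAt_logState (hh : AnalyticAt ℝ h r) (hr : h r ≠ 0) :
    AnalyticAt ℝ (logState h) r := by
  have inv_an : AnalyticAt ℝ (fun r => (h r)⁻¹) r := hh.fun_inv hr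
  have slope_an : AnalyticAt ℝ (fun r => r * deriv h r / 2) r :=
    (analyticAt_id.fun_mul hh.deriv).fun_div analyticAt_const two_ne_zero
  exact (inv_an.fun_sub analyticAt_const).prod
    ((analyticAt_id.fun_mul inv_an).prod (slope_an.fun_mul inv_an))

lemma hasDerivAt_logState (hh : AnalyticAt ℝ h r) (hr : h r ≠ 0) :
    HasDerivAt (logState h)
      (-deriv h r / h r ^ 2, (h r - r * deriv h r) / h r ^ 2,
        ((deriv h r + r * deriv (deriv h) r) * h r - r * deriv h r ^ 2) / (2 * h r ^ 2)) r := by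
  have inv_deriv := hh.differentiableAt.hasDerivAt.fun_inv hr
  have slope_deriv :=
    ((hasDerivAt_id' r).fun_mul hh.deriv.differentiableAt.hasDerivAt).div_const 2
  refine ((inv_deriv.sub_const 1).prodMk (((hasDerivAt_id' r).fun_mul inv_deriv).prodMk
    (slope_deriv.fun_mul inv_deriv))).congr_deriv ?_
  ext <;> field_simp <;> ring

lemma smul_deriv_logState_eq (hh : AnalyticAt ℝ h r) (hr : h r ≠ 0)
    (ode : 2 * r ^ 2 * h r * deriv (deriv h) r =
      m * h r * (h r - 1) + r * deriv h r * (r * deriv h r - lam * r - m)) :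
    r • deriv (logState h) r = logField m lam (logState h r) := by
  rw [(hasDerivAt_logState hh hr).deriv, logField_apply]
  simp only [logState, Prod.smul_mk, smul_eq_mul, Prod.mk.injEq]
  refine ⟨?_, ?_, ?_⟩ <;> field_simp
  · ring
  · linear_combination 4 * ode

lemma inv_one_add_fst_logState (h : ℝ → ℝ) (r : ℝ) : (1 + (logState h r).1)⁻¹ = h r := by
  simp [logState]

lemma eventually_smul_deriv_logState_eq (hh : AnalyticAt ℝ h 0) (h0 : h 0 ≠ 0)
    (ode : ∀ᶠ r in 𝓝[>] 0, 2 * r ^ 2 * h r * deriv (deriv h) r =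
      m * h r * (h r - 1) + r * deriv h r * (r * deriv h r - lam * r - m)) :
    ∀ᶠ r in 𝓝 0, r • deriv (logState h) r = logField m lam (logState h r) := by
  have state_an := analyticAt_logState hh h0
  have field_an : AnalyticAt ℝ (fun r => logField m lam (logState h r)) 0 :=
    ((logSystemLinear m).analyticAt _ |>.comp state_an).fun_add
      ((logSystemBilinear m lam).analyticAt_bilinear _ |>.comp (state_an.prod state_an))
  refine ((analyticAt_id.smul state_an.deriv).frequently_eq_iff_eventually_eq field_an).1 ?_
  have eventually_eq : ∀ᶠ r in 𝓝[>] 0,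
      r • deriv (logState h) r = logField m lam (logState h r) := by
    filter_upwards [ode, hh.eventually_analyticAt.filter_mono nhdsWithin_le_nhds,
      (hh.continuousAt.eventually_ne h0).filter_mono nhdsWithin_le_nhds] with r ode_r hr hr0
    exact smul_deriv_logState_eq hr hr0 ode_r
  exact eventually_eq.frequently.filter_mono (nhdsWithin_mono _ fun r hr => ne_of_gt hr)

lemma eventuallyEq_of_singular_ode (hm : 0 ≤ m) {g : ℝ → ℝ} (hg : AnalyticAt ℝ g 0)
    (hh : AnalyticAt ℝ h 0) (g0 : g 0 = 1) (h0 : h 0 = 1) (hgh : deriv g 0 = deriv h 0)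
    (ode_g : ∀ᶠ r in 𝓝[>] 0, 2 * r ^ 2 * g r * deriv (deriv g) r =
      m * g r * (g r - 1) + r * deriv g r * (r * deriv g r - lam * r - m))
    (ode_h : ∀ᶠ r in 𝓝[>] 0, 2 * r ^ 2 * h r * deriv (deriv h) r =
      m * h r * (h r - 1) + r * deriv h r * (r * deriv h r - lam * r - m)) :
    g =ᶠ[𝓝 0] h := by
  have g0_ne : g 0 ≠ 0 := by simp [g0]
  have h0_ne : h 0 ≠ 0 := by simp [h0]
  have state_eq : logState g =ᶠ[𝓝 0] logState h := by
    refine eventuallyEq_of_smul_deriv_eq (B := logSystemBilinear m lam)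
      (fun _ => natCast_notMem_spectrum_logSystemLinear hm) (analyticAt_logState hg g0_ne)
      (analyticAt_logState hh h0_ne) (by simp [logState, g0]) (by simp [logState, h0]) ?_
      (eventually_smul_deriv_logState_eq hg g0_ne ode_g)
      (eventually_smul_deriv_logState_eq hh h0_ne ode_h)
    simp [(hasDerivAt_logState hg g0_ne).deriv, (hasDerivAt_logState hh h0_ne).deriv, g0, h0, hgh]
  filter_upwards [state_eq] with r hr
  rw [← inv_one_add_fst_logState g, hr, inv_one_add_fst_logState]

variable {n : ℕ} {μ₁ : ℝ}

lemma eventually_eventuallyEq_nhds_of_nhdsGT {g : ℝ → ℝ} (hgh : g =ᶠ[𝓝[>] r] h) :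
    ∀ᶠ x in 𝓝[>] r, g =ᶠ[𝓝 x] h := by
  filter_upwards [eventually_eventually_nhdsWithin.2 hgh, self_mem_nhdsWithin] with x hx hrx
  rwa [isOpen_Ioi.nhdsWithin_eq hrx] at hx

lemma exists_analyticAt_extension_of_isAnalyticSol (hh : IsAnalyticSol n lam μ₁ h) :
    ∃ H : ℝ → ℝ, AnalyticAt ℝ H 0 ∧ H 0 = 1 ∧ deriv H 0 = μ₁ ∧ h =ᶠ[𝓝[>] 0] H ∧
      ∀ᶠ r in 𝓝[>] 0, 2 * r ^ 2 * H r * deriv (deriv H) r =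
        ((n : ℝ) - 1) * H r * (H r - 1) +
          r * deriv H r * (r * deriv H r - lam * r - ((n : ℝ) - 1)) := by
  obtain ⟨h_an, ode, h_zero, h_deriv⟩ := hh
  obtain ⟨H, h_eq, hH⟩ := analyticWithinAt_iff_exists_analyticAt.1 (h_an 0 self_mem_Ici)
  rw [insert_eq_of_mem self_mem_Ici] at h_eq
  have h_eq_zero : h 0 = H 0 := h_eq.self_of_nhdsWithin self_mem_Ici
  have h_eq_pos : h =ᶠ[𝓝[>] 0] H := h_eq.filter_mono (nhdsWithin_mono _ Ioi_subset_Ici_self)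
  refine ⟨H, hH, by rw [← h_eq_zero, h_zero], ?_, h_eq_pos, ?_⟩
  · rw [← h_deriv, h_eq.derivWithin_eq h_eq_zero]
    exact (hH.differentiableAt.derivWithin (uniqueDiffOn_Ici 0 0 self_mem_Ici)).symm
  · filter_upwards [eventually_eventuallyEq_nhds_of_nhdsGT h_eq_pos, self_mem_nhdsWithin]
      with r hr r_pos
    simpa only [hr.eq_of_nhds, hr.deriv_eq, hr.deriv.deriv_eq] using (ode r r_pos).1

theorem eqOn_of_isAnalyticSol (hn : 1 ≤ n) {g : ℝ → ℝ} (hg : IsAnalyticSol n lam μ₁ g)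
    (hh : IsAnalyticSol n lam μ₁ h) : EqOn g h (Ici 0) := by
  have hm : (0 : ℝ) ≤ n - 1 := by
    rw [sub_nonneg]
    exact_mod_cast hn
  obtain ⟨G, hG, G0, G'0, g_eq_G, ode_G⟩ := exists_analyticAt_extension_of_isAnalyticSol hg
  obtain ⟨H, hH, H0, H'0, h_eq_H, ode_H⟩ := exists_analyticAt_extension_of_isAnalyticSol hh
  have G_eq_H : G =ᶠ[𝓝 0] H :=
    eventuallyEq_of_singular_ode hm hG hH G0 H0 (G'0.trans H'0.symm) ode_G ode_H
  have g_eq_h : g =ᶠ[𝓝[>] 0] h :=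
    g_eq_G.trans ((G_eq_H.filter_mono nhdsWithin_le_nhds).trans h_eq_H.symm)
  obtain ⟨r₀, hr₀, r₀_pos⟩ :=
    ((eventually_eventuallyEq_nhds_of_nhdsGT g_eq_h).and self_mem_nhdsWithin).exists
  have analyticOnNhd {f : ℝ → ℝ} (hf : IsAnalyticSol n lam μ₁ f) : AnalyticOnNhd ℝ f (Ioi 0) :=
    isOpen_Ioi.analyticOn_iff_analyticOnNhd.1 (hf.1.mono Ioi_subset_Ici_self)
  have eqOn_Ioi : EqOn g h (Ioi 0) :=
    (analyticOnNhd hg).eqOn_of_preconnected_of_eventuallyEq (analyticOnNhd hh)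
      isPreconnected_Ioi r₀_pos hr₀
  intro r hr
  rcases eq_or_lt_of_le (mem_Ici.1 hr) with rfl | hr
  · rw [hg.2.2.1, hh.2.2.1]
  · exact eqOn_Ioi hr

end Uniqueness

theorem existence_uniqueness_analytic (lam μ₁ : ℝ) (n : ℕ) (hlam : 0 ≤ lam)
    (hn2 : 2 ≤ n) :
    ∃ h : ℝ → ℝ, IsAnalyticSol n lam μ₁ h ∧
      ∀ g : ℝ → ℝ, IsAnalyticSol n lam μ₁ g → Set.EqOn g h (Set.Ici 0) := by
  obtain ⟨h, hh⟩ := exists_isAnalyticSol hn2 hlam μ₁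
  exact ⟨h, hh, fun g hg => eqOn_of_isAnalyticSol (one_le_two.trans hn2) hg hh⟩
end

section
/- Let μ₁ < 0 and let n ≥ 2 be an integer. Suppose h ∈ C²((0,∞)) ∩ C¹([0,∞)) is a solution of the steady equation 2r²h(r)h''(r) = (n-1)h(r)(h(r)-1) + r h'(r)(r h'(r) - (n-1)), h(r) > 0 for r > 0, with h(0) = 1 and h'(0) = μ₁. Then h(r) → 0 as r → ∞. -/
open Set Filter Topology

/-- `h` is a solution of the steady equation
`2r²h h'' = (n-1)h(h-1) + r h'(r h' - (n-1))`, `h > 0` on `(0,∞)`,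
with `h ∈ C²((0,∞)) ∩ C¹([0,∞))`, `h(0) = 1` and `h'(0) = μ₁`. -/
def IsSteadySol (n : ℕ) (μ₁ : ℝ) (h : ℝ → ℝ) : Prop :=
  ContDiffOn ℝ 2 h (Set.Ioi 0) ∧ ContDiffOn ℝ 1 h (Set.Ici 0) ∧
  (∀ r : ℝ, 0 < r →
    2 * r ^ 2 * h r * deriv (deriv h) r =
      ((n : ℝ) - 1) * h r * (h r - 1) +
        r * deriv h r * (r * deriv h r - ((n : ℝ) - 1)) ∧ 0 < h r) ∧
  h 0 = 1 ∧ derivWithin h (Set.Ici 0) 0 = μ₁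

/-!
In the logarithmic variable the equation becomes autonomous: with `E = r d/dr` and `m = n - 1`,
`2 h E²h = (E h)² + (2 h - m) E h - m h (1 - h)`. Hence, for `0 ≤ δ < h (1 - h)`, the function
`E h` is decreasing wherever it takes the value `-δ`, so it can never cross this level upwards.
Just after `r = 0` we have `h < 1` and `E h < 0`. The barrier `δ = 0` shows that `h` keeps
decreasing. If `h` stayed above some `ε > 0`, then `h (1 - h)` would be bounded away from `0`, and a
barrier `δ > 0` would give `E h ≤ -δ`: then `h` would tend to `-∞` at least as fast as `-δ log r`,
contradicting `h > 0`.
-/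

theorem lt_of_deriv_neg_of_first_eq {f : ℝ → ℝ} {a c : ℝ} (hf : ContinuousOn f (Ici a))
    (hfa : f a < c)
    (hderiv : ∀ s, a < s → (∀ r ∈ Ico a s, f r < c) → f s = c → deriv f s < 0) :
    ∀ r, a ≤ r → f r < c := by
  by_contra! ⟨b, hab, hfb⟩
  have hf_Icc : ContinuousOn f (Icc a b) := hf.mono Icc_subset_Ici_self
  have hcompact : IsCompact (Icc a b ∩ f ⁻¹' Ici c) :=
    isCompact_Icc.of_isClosed_subset
      (hf_Icc.preimage_isClosed_of_isClosed isClosed_Icc isClosed_Ici) inter_subset_left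
  obtain ⟨s, ⟨hs, hcs⟩, hleast⟩ :=
    hcompact.exists_isLeast ⟨b, right_mem_Icc.2 hab, hfb⟩
  have has : a < s := hs.1.lt_of_ne (by rintro rfl; exact hfa.not_ge hcs)
  have hbelow : ∀ r ∈ Ico a s, f r < c := fun r hr => by
    by_contra! hcr
    exact hr.2.not_ge (hleast ⟨⟨hr.1, hr.2.le.trans hs.2⟩, hcr⟩)
  have hleft : ∀ᶠ r in 𝓝[<] s, r ∈ Ico a s := Ico_mem_nhdsLT has
  have hfs : f s = c :=
    le_antisymm
      (le_of_tendsto ((hf.continuousAt (Ici_mem_nhds has)).mono_left nhdsWithin_le_nhds)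
        (hleft.mono fun r hr => (hbelow r hr).le))
      hcs
  have hsign : ∀ᶠ r in 𝓝[<] s, SignType.sign (f r - c) = SignType.sign (s - r) :=
    nhdsWithin_le_nhds (eventually_nhdsWithin_sign_eq_of_deriv_neg
      (f := fun r => f r - c) (by simpa using hderiv s has hbelow hfs) (by simp [hfs]))
  obtain ⟨r, hr, hrsign⟩ := (hleft.and hsign).exists
  rw [sign_pos (sub_pos.2 hr.2), sign_eq_one_iff, sub_pos] at hrsign
  exact hrsign.not_gt (hbelow r hr)

theorem tendsto_zero_or_exists_pos_le_of_antitoneOn {f : ℝ → ℝ} {a : ℝ}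
    (hf : AntitoneOn f (Ici a)) (hf0 : ∀ r, a ≤ r → 0 ≤ f r) :
    Tendsto f atTop (𝓝 0) ∨ ∃ ε > 0, ∀ r, a ≤ r → ε ≤ f r := by
  refine or_iff_not_imp_right.2 fun hbound => Metric.tendsto_atTop.2 fun ε hε => ?_
  push Not at hbound
  obtain ⟨b, hab, hfb⟩ := hbound ε hε
  refine ⟨b, fun r hbr => ?_⟩
  have har : a ≤ r := hab.trans hbr
  rw [Real.dist_0_eq_abs, abs_of_nonneg (hf0 r har)]
  exact (hf hab har hbr).trans_lt hfb

theorem eventually_lt_and_deriv_neg_of_derivWithin_neg {f : ℝ → ℝ} {a : ℝ}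
    (hf : ContDiffOn ℝ 1 f (Ici a)) (hneg : derivWithin f (Ici a) a < 0) :
    ∀ᶠ r in 𝓝[>] a, f r < f a ∧ deriv f r < 0 := by
  have hslope : ∀ᶠ r in 𝓝[>] a, slope f a r < 0 := 
    ((hf.differentiableOn one_ne_zero a self_mem_Ici).hasDerivWithinAt.mono
      Ioi_subset_Ici_self).limsup_slope_le' self_notMem_Ioi hneg
  have hderivWithin : ∀ᶠ r in 𝓝[>] a, derivWithin f (Ici a) r < 0 :=
    nhdsWithin_mono a Ioi_subset_Ici_self
      ((hf.continuousOn_derivWithin (uniqueDiffOn_Ici a) le_rfl a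
        self_mem_Ici).eventually_lt_const hneg)
  filter_upwards [hslope, hderivWithin, self_mem_nhdsWithin] with r hr hdr har
  rw [derivWithin_of_mem_nhds (Ici_mem_nhds har)] at hdr
  exact ⟨(slope_neg_iff_of_le (le_of_lt har)).1 hr, hdr⟩

/-- The Euler operator `r d/dr`, that is, differentiation with respect to `log r`. -/
noncomputable def eulerDeriv (f : ℝ → ℝ) (r : ℝ) : ℝ :=
  r * deriv f r

theorem hasDerivAt_eulerDeriv {f : ℝ → ℝ} {r : ℝ} (hf : DifferentiableAt ℝ (deriv f) r) :
    HasDerivAt (eulerDeriv f) (deriv f r + r * deriv (deriv f) r) r :=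
  ((hasDerivAt_id r).mul hf.hasDerivAt).congr_deriv (by rw [one_mul, id_eq])

theorem eulerDeriv_neg_iff {f : ℝ → ℝ} {r : ℝ} (hr : 0 < r) :
    eulerDeriv f r < 0 ↔ deriv f r < 0 :=
  smul_neg_iff_of_pos_left hr

theorem tendsto_atBot_of_eulerDeriv_le {f : ℝ → ℝ} {a κ : ℝ} (ha : 0 < a) (hκ : 0 < κ)
    (hf : ∀ r, a ≤ r → DifferentiableAt ℝ f r) (hle : ∀ r, a ≤ r → eulerDeriv f r ≤ -κ) :
    Tendsto f atTop atBot := by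
  have hderiv : ∀ r, a ≤ r →
      HasDerivAt (fun r => f r + κ * Real.log r) (deriv f r + κ * r⁻¹) r := fun r hr =>
    (hf r hr).hasDerivAt.add ((Real.hasDerivAt_log (ha.trans_le hr).ne').const_mul κ)
  have hanti : AntitoneOn (fun r => f r + κ * Real.log r) (Ici a) := by
    refine antitoneOn_of_hasDerivWithinAt_nonpos (convex_Ici a)
      (fun r hr => (hderiv r hr).continuousAt.continuousWithinAt)
      (fun r hr => (hderiv r (interior_subset hr)).hasDerivWithinAt) fun r hr => ?_
    have hr : a ≤ r := interior_subset hr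
    have hr0 : 0 < r := ha.trans_le hr
    calc deriv f r + κ * r⁻¹ = (eulerDeriv f r + κ) * r⁻¹ := by
          rw [eulerDeriv]; field_simp
      _ ≤ 0 := mul_nonpos_of_nonpos_of_nonneg (by linarith [hle r hr]) (by positivity)
  have hlog : Tendsto (fun r => f a + κ * Real.log a - κ * Real.log r) atTop atBot :=
    tendsto_atBot_add_const_left _ _
      (tendsto_neg_atTop_atBot.comp (Real.tendsto_log_atTop.const_mul_atTop hκ))
  refine tendsto_atBot_mono' _ ?_ hlog
  filter_upwards [eventually_ge_atTop a] with r hr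
  exact le_sub_iff_add_le.2 (hanti self_mem_Ici hr hr)

/-- `h` is a positive, twice differentiable solution on `s` of the steady equation, in which the
coefficient `n - 1` is replaced by an arbitrary real number `m`. The derivatives are two-sided, also
at boundary points of `s`. -/
structure IsSteadyOn (m : ℝ) (s : Set ℝ) (h : ℝ → ℝ) : Prop where
  pos : ∀ r ∈ s, 0 < h r
  differentiableAt : ∀ r ∈ s, DifferentiableAt ℝ h r
  differentiableAt_deriv : ∀ r ∈ s, DifferentiableAt ℝ (deriv h) r
  equation : ∀ r ∈ s, 2 * r ^ 2 * h r * deriv (deriv h) r =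
    m * h r * (h r - 1) + r * deriv h r * (r * deriv h r - m)

namespace IsSteadyOn

variable {m a δ r : ℝ} {s t : Set ℝ} {h : ℝ → ℝ}

theorem mono (hsol : IsSteadyOn m t h) (hst : s ⊆ t) : IsSteadyOn m s h where
  pos r hr := hsol.pos r (hst hr)
  differentiableAt r hr := hsol.differentiableAt r (hst hr)
  differentiableAt_deriv r hr := hsol.differentiableAt_deriv r (hst hr)
  equation r hr := hsol.equation r (hst hr)

theorem continuousOn (hsol : IsSteadyOn m s h) : ContinuousOn h s := fun r hr =>
  (hsol.differentiableAt r hr).continuousAt.continuousWithinAt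

theorem eulerDeriv_eulerDeriv (hsol : IsSteadyOn m s h) (hr : r ∈ s) :
    2 * h r * eulerDeriv (eulerDeriv h) r =
      eulerDeriv h r ^ 2 + (2 * h r - m) * eulerDeriv h r - m * (h r * (1 - h r)) := by
  rw [eulerDeriv, (hasDerivAt_eulerDeriv (hsol.differentiableAt_deriv r hr)).deriv, eulerDeriv]
  linear_combination hsol.equation r hr

theorem deriv_eulerDeriv_neg (hsol : IsSteadyOn m s h) (hm : 0 < m) (hr : r ∈ s) (hr0 : 0 < r)
    (hδ : 0 ≤ δ) (hδh : δ < h r * (1 - h r)) (heuler : eulerDeriv h r = -δ) :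
    deriv (eulerDeriv h) r < 0 := by
  have hpos : 0 < h r := hsol.pos r hr
  have hδ_le : δ ≤ 2 * h r := by nlinarith
  have hprod : 2 * h r * r * deriv (eulerDeriv h) r < 0 :=
    calc 2 * h r * r * deriv (eulerDeriv h) r
        = -(δ * (2 * h r - δ)) - m * (h r * (1 - h r) - δ) := by
          have heq := hsol.eulerDeriv_eulerDeriv hr
          rw [heuler, eulerDeriv] at heq
          linear_combination heq
      _ < 0 := by
          have hlinear : 0 < m * (h r * (1 - h r) - δ) := mul_pos hm (sub_pos.2 hδh)
          have hquadratic : 0 ≤ δ * (2 * h r - δ) := mul_nonneg hδ (sub_nonneg.2 hδ_le)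
          linarith
  exact neg_of_mul_neg_right hprod (by positivity)

theorem eulerDeriv_lt_neg (hsol : IsSteadyOn m (Ici a) h) (hm : 0 < m) (ha : 0 < a) (hδ : 0 ≤ δ)
    (hinit : eulerDeriv h a < -δ)
    (hδh : ∀ s, a < s → (∀ r ∈ Ico a s, eulerDeriv h r < -δ) → δ < h s * (1 - h s)) :
    ∀ r, a ≤ r → eulerDeriv h r < -δ := by
  refine lt_of_deriv_neg_of_first_eq (fun r hr => ?_) hinit fun s has hbelow hs =>
    hsol.deriv_eulerDeriv_neg hm has.le (ha.trans has) hδ (hδh s has hbelow) hs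
  exact (hasDerivAt_eulerDeriv
    (hsol.differentiableAt_deriv r hr)).continuousAt.continuousWithinAt

theorem deriv_neg (hsol : IsSteadyOn m (Ici a) h) (hm : 0 < m) (ha : 0 < a) (hlt : h a < 1)
    (hderiv : deriv h a < 0) : ∀ r, a ≤ r → deriv h r < 0 := by
  have heuler : ∀ r, a ≤ r → eulerDeriv h r < -0 := by
    refine hsol.eulerDeriv_lt_neg hm ha le_rfl ?_ fun s has hbelow => ?_
    · rwa [neg_zero, eulerDeriv_neg_iff ha]
    have hanti : StrictAntiOn h (Icc a s) := by
      refine strictAntiOn_of_deriv_neg (convex_Icc a s)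
        (hsol.continuousOn.mono Icc_subset_Ici_self) fun r hr => ?_
      rw [interior_Icc] at hr
      rw [← eulerDeriv_neg_iff (ha.trans hr.1), ← neg_zero]
      exact hbelow r (Ioo_subset_Ico_self hr)
    have hs : h s < h a := hanti (left_mem_Icc.2 has.le) (right_mem_Icc.2 has.le) has
    exact mul_pos (hsol.pos s has.le) (sub_pos.2 (hs.trans hlt))
  intro r hr
  rw [← eulerDeriv_neg_iff (ha.trans_le hr), ← neg_zero]
  exact heuler r hr

theorem antitoneOn (hsol : IsSteadyOn m (Ici a) h) (hm : 0 < m) (ha : 0 < a) (hlt : h a < 1)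
    (hderiv : deriv h a < 0) : AntitoneOn h (Ici a) :=
  (strictAntiOn_of_deriv_neg (convex_Ici a) hsol.continuousOn fun r hr =>
    hsol.deriv_neg hm ha hlt hderiv r (interior_subset hr)).antitoneOn

theorem tendsto_atBot_of_pos_le (hsol : IsSteadyOn m (Ici a) h) (hm : 0 < m) (ha : 0 < a)
    (hlt : h a < 1) (hderiv : deriv h a < 0) {ε : ℝ} (hε : 0 < ε) (hle : ∀ r, a ≤ r → ε ≤ h r) :
    Tendsto h atTop atBot := by
  have hinit : 0 < -eulerDeriv h a := neg_pos.2 ((eulerDeriv_neg_iff ha).2 hderiv)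
  obtain ⟨δ, hδ, hδ_lt⟩ := exists_between (lt_min hinit (mul_pos hε (sub_pos.2 hlt)))
  obtain ⟨hδ_init, hδ_gap⟩ := lt_min_iff.1 hδ_lt
  have hgap : ∀ s, a ≤ s → ε * (1 - h a) ≤ h s * (1 - h s) := fun s has =>
    mul_le_mul (hle s has)
      (sub_le_sub_left (hsol.antitoneOn hm ha hlt hderiv self_mem_Ici has has) 1)
      (sub_nonneg.2 hlt.le) (hsol.pos s has).le
  have heuler : ∀ r, a ≤ r → eulerDeriv h r < -δ :=
    hsol.eulerDeriv_lt_neg hm ha hδ.le (lt_neg_of_lt_neg hδ_init) fun s has _ =>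
      hδ_gap.trans_le (hgap s has.le)
  exact tendsto_atBot_of_eulerDeriv_le ha hδ hsol.differentiableAt fun r hr => (heuler r hr).le

end IsSteadyOn

theorem steady_tendsto_zero_general {m a : ℝ} {h : ℝ → ℝ} (hm : 0 < m) (ha : 0 < a)
    (hsol : IsSteadyOn m (Ici a) h) (hlt : h a < 1) (hderiv : deriv h a < 0) :
    Tendsto h atTop (𝓝 0) := by
  refine (tendsto_zero_or_exists_pos_le_of_antitoneOn (hsol.antitoneOn hm ha hlt hderiv)
    fun r hr => (hsol.pos r hr).le).resolve_right ?_
  rintro ⟨ε, hε, hle⟩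
  have hbot : Tendsto h atTop atBot := hsol.tendsto_atBot_of_pos_le hm ha hlt hderiv hε hle
  obtain ⟨r, hr, har⟩ := ((hbot.eventually_lt_atBot ε).and (eventually_ge_atTop a)).exists
  exact (hle r har).not_gt hr

namespace IsSteadySol

variable {n : ℕ} {μ₁ : ℝ} {h : ℝ → ℝ}

theorem isSteadyOn (hsol : IsSteadySol n μ₁ h) : IsSteadyOn (n - 1) (Ioi 0) h := by
  obtain ⟨hC2, -, hode, -, -⟩ := hsol
  have hderiv : ContDiffOn ℝ 1 (deriv h) (Ioi 0) :=
    hC2.deriv_of_isOpen isOpen_Ioi one_add_one_eq_two.le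
  exact
    { pos := fun r hr => (hode r hr).2
      differentiableAt := fun r hr =>
        (hC2.differentiableOn two_ne_zero).differentiableAt (Ioi_mem_nhds hr)
      differentiableAt_deriv := fun r hr =>
        (hderiv.differentiableOn one_ne_zero).differentiableAt (Ioi_mem_nhds hr)
      equation := fun r hr => (hode r hr).1 }

theorem exists_lt_one_and_deriv_neg (hsol : IsSteadySol n μ₁ h) (hμ : μ₁ < 0) :
    ∃ a > 0, h a < 1 ∧ deriv h a < 0 := by
  obtain ⟨-, hC1, -, h_zero, hderiv_zero⟩ := hsol
  obtain ⟨a, ⟨hlt, hderiv⟩, ha⟩ :=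
    ((eventually_lt_and_deriv_neg_of_derivWithin_neg hC1 (hderiv_zero.trans_lt hμ)).and
      self_mem_nhdsWithin).exists
  exact ⟨a, ha, h_zero ▸ hlt, hderiv⟩

end IsSteadySol

theorem steady_tendsto_zero (μ₁ : ℝ) (n : ℕ) (hμ : μ₁ < 0) (hn2 : 2 ≤ n)
    (h : ℝ → ℝ) (hsol : IsSteadySol n μ₁ h) :
    Filter.Tendsto h Filter.atTop (nhds 0) := by
  obtain ⟨a, ha, hlt, hderiv⟩ := hsol.exists_lt_one_and_deriv_neg hμ
  exact steady_tendsto_zero_general (sub_pos.2 (Nat.one_lt_cast.2 hn2)) ha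
    (hsol.isSteadyOn.mono (Ici_subset_Ioi.2 ha)) hlt hderiv
end

section
/- Let μ₁ < 0 and let n ≥ 2 be an integer. Suppose h ∈ C²((0,∞)) ∩ C¹([0,∞)) is a solution of the steady equation 2r²h(r)h''(r) = (n-1)h(r)(h(r)-1) + r h'(r)(r h'(r) - (n-1)), h(r) > 0 for r > 0, with h(0) = 1 and h'(0) = μ₁. Then r h'(r)/h(r) → -1 as r → ∞. -/
open Set Filter Topology

/-!
In the variable `t = log r`, put `H = h` and `W = r h' / h`, and let `m = n - 1`. The steady
equation becomes the autonomous system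
`H' = H W`, `2 W' = -W² + 2 W + m - (m / H) (1 + W)`.
The region `H < 1`, `W < 0` is forward invariant, with `W` staying away from `0`, and the initial
data put the solution there for small `r`. Hence `log H` decreases at least linearly and `H → 0`.
The term `-(m / H) (1 + W)` then dominates and drives `W` to `-1`. The only competitor is `-W²` for
very negative `W`; in `(H W)'` the quadratic term has the opposite sign, so the lower bound comes
from the function `-H (W + 1 + δ)`.
-/

section RealDerivatives

variable {f f' : ℝ → ℝ} {a b c : ℝ}

lemma eventually_nhdsGT_lt_of_hasDerivWithinAt_neg {d : ℝ} (hf : HasDerivWithinAt f d (Ioi a) a)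
    (hd : d < 0) : ∀ᶠ x in 𝓝[>] a, f x < f a := by
  filter_upwards [hf.limsup_slope_le' self_notMem_Ioi hd, self_mem_nhdsWithin] with x hslope hx
  have hxa : 0 < x - a := sub_pos.2 hx
  rw [slope_def_field, div_neg_iff] at hslope
  rcases hslope with ⟨-, hneg⟩ | ⟨hneg, -⟩ <;> linarith

lemma exists_gt_lt_and_deriv_neg (hf : ContDiffOn ℝ 1 f (Ici a))
    (hd : derivWithin f (Ici a) a < 0) : ∃ x > a, f x < f a ∧ deriv f x < 0 := by
  have hderiv : HasDerivWithinAt f (derivWithin f (Ici a) a) (Ioi a) a :=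
    ((hf.differentiableOn one_ne_zero a self_mem_Ici).hasDerivWithinAt).mono Ioi_subset_Ici_self
  have hcont : Tendsto (derivWithin f (Ici a)) (𝓝[>] a) (𝓝 (derivWithin f (Ici a) a)) :=
    (hf.continuousOn_derivWithin (uniqueDiffOn_Ici a) le_rfl a self_mem_Ici).mono
      Ioi_subset_Ici_self
  obtain ⟨x, hlt, hneg, hx⟩ := ((eventually_nhdsGT_lt_of_hasDerivWithinAt_neg hderiv hd).and
    ((hcont.eventually_lt_const hd).and self_mem_nhdsWithin)).exists
  exact ⟨x, hx, hlt, by rwa [derivWithin_of_mem_nhds (Ici_mem_nhds hx)] at hneg⟩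

lemma le_of_deriv_neg_at_first_contact (hf : ∀ t ≥ a, HasDerivAt f (f' t) t) (ha : f a ≤ b)
    (hcontact : ∀ t ≥ a, (∀ s ∈ Icc a t, f s ≤ b) → f t = b → f' t < 0) :
    ∀ t ≥ a, f t ≤ b := by
  intro T hT
  have hcont : ContinuousOn f (Icc a T) := fun t ht ↦
    (hf t ht.1).continuousAt.continuousWithinAt
  have hclosed : IsClosed ({t | f t ≤ b} ∩ Icc a T) := by
    rw [inter_comm]
    exact hcont.preimage_isClosed_of_isClosed isClosed_Icc isClosed_Iic
  refine hclosed.Icc_subset_of_forall_mem_nhdsGT_of_Icc_subset ha ?_ (right_mem_Icc.2 hT)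
  intro t ht hbefore
  have hle : f t ≤ b := hbefore (right_mem_Icc.2 ht.1)
  rcases hle.lt_or_eq with hlt | heq
  · filter_upwards [((hf t ht.1).continuousAt.eventually_lt_const hlt).filter_mono
      nhdsWithin_le_nhds] with s hs using hs.le
  · filter_upwards [eventually_nhdsGT_lt_of_hasDerivWithinAt_neg (hf t ht.1).hasDerivWithinAt
      (hcontact t ht.1 hbefore heq)] with s hs using hs.le.trans_eq heq

lemma tendsto_atBot_of_deriv_le_neg (hc : 0 < c) (hf : ∀ᶠ t in atTop, HasDerivAt f (f' t) t)
    (hf' : ∀ᶠ t in atTop, f' t ≤ -c) : Tendsto f atTop atBot := by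
  obtain ⟨a, ha⟩ := eventually_atTop.1 (hf.and hf')
  have hline : Tendsto (fun t ↦ f a + -c * (t - a)) atTop atBot :=
    tendsto_atBot_add_const_left _ _ <|
      (tendsto_atTop_add_const_right _ (-a) tendsto_id).const_mul_atTop_of_neg (neg_neg_of_pos hc)
  refine tendsto_atBot_mono' _ ?_ hline
  filter_upwards [eventually_ge_atTop a] with t ht
  have hslope := (convex_Ici a).image_sub_le_mul_sub_of_deriv_le (C := -c)
    (fun x hx ↦ (ha x hx).1.continuousAt.continuousWithinAt)
    (fun x hx ↦ (ha x (interior_subset hx)).1.differentiableAt.differentiableWithinAt)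
    (fun x hx ↦ (ha x (interior_subset hx)).1.deriv.trans_le (ha x (interior_subset hx)).2)
    a self_mem_Ici t ht ht
  linarith

lemma eventually_le_of_deriv_le_neg (hc : 0 < c) (hf : ∀ᶠ t in atTop, HasDerivAt f (f' t) t)
    (hf' : ∀ᶠ t in atTop, b ≤ f t → f' t ≤ -c) : ∀ᶠ t in atTop, f t ≤ b := by
  obtain ⟨a, ha⟩ := eventually_atTop.1 (hf.and hf')
  obtain ⟨t₀, hat₀, ht₀⟩ : ∃ t₀ ≥ a, f t₀ ≤ b := by
    by_contra! habove
    have hescape : Tendsto f atTop atBot := tendsto_atBot_of_deriv_le_neg hc hf <| by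
      filter_upwards [eventually_ge_atTop a] with t ht using (ha t ht).2 (habove t ht).le
    obtain ⟨t, hle, hat⟩ :=
      ((hescape.eventually_le_atBot b).and (eventually_ge_atTop a)).exists
    exact (habove t hat).not_ge hle
  filter_upwards [eventually_ge_atTop t₀] with t ht
  refine le_of_deriv_neg_at_first_contact (fun s hs ↦ (ha s (hat₀.trans hs)).1) ht₀ ?_ t ht
  intro s hs _ heq
  linarith [(ha s (hat₀.trans hs)).2 heq.ge]

end RealDerivatives

/-- The steady equation in logarithmic time `t = log r`, as a first-order system for `H t = h r`
and the logarithmic derivative `W t = r h'(r) / h r`; the real parameter `m` stands for `n - 1`. -/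
structure IsLogSteadySol (m : ℝ) (H W : ℝ → ℝ) : Prop where
  pos : ∀ t, 0 < H t
  hasDerivAt_fst : ∀ t, HasDerivAt H (H t * W t) t
  hasDerivAt_snd : ∀ t,
    HasDerivAt W ((-W t ^ 2 + 2 * W t + m - m / H t * (1 + W t)) / 2) t

namespace IsLogSteadySol

variable {m : ℝ} {H W : ℝ → ℝ}

lemma hasDerivAt_log_fst (sol : IsLogSteadySol m H W) (t : ℝ) :
    HasDerivAt (fun s ↦ Real.log (H s)) (W t) t := by
  simpa only [mul_div_cancel_left₀ _ (sol.pos t).ne'] using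
    (sol.hasDerivAt_fst t).log (sol.pos t).ne'

lemma antitoneOn_fst_of_snd_nonpos (sol : IsLogSteadySol m H W) {a b : ℝ}
    (hW : ∀ t ∈ Icc a b, W t ≤ 0) : AntitoneOn H (Icc a b) :=
  antitoneOn_of_hasDerivWithinAt_nonpos (convex_Icc a b)
    (fun t _ ↦ (sol.hasDerivAt_fst t).continuousAt.continuousWithinAt)
    (fun t _ ↦ (sol.hasDerivAt_fst t).hasDerivWithinAt)
    (fun t ht ↦ mul_nonpos_of_nonneg_of_nonpos (sol.pos t).le (hW t (interior_subset ht)))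

lemma snd_le_neg (sol : IsLogSteadySol m H W) (hm : 0 ≤ m) {a ε : ℝ} (hε : 0 < ε)
    (hWa : W a ≤ -ε) (hHa : H a ≤ 1 - ε) : ∀ t ≥ a, W t ≤ -ε := by
  refine le_of_deriv_neg_at_first_contact (fun t _ ↦ sol.hasDerivAt_snd t) hWa ?_
  intro t hat hbefore hWt
  have hHt : H t ≤ 1 - ε :=
    (sol.antitoneOn_fst_of_snd_nonpos (fun s hs ↦ (hbefore s hs).trans (neg_nonpos.2 hε.le))
      (left_mem_Icc.2 hat) (right_mem_Icc.2 hat) hat).trans hHa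
  have hforce : m ≤ m / H t * (1 - ε) := by
    rw [div_mul_eq_mul_div, le_div_iff₀ (sol.pos t)]
    exact mul_le_mul_of_nonneg_left hHt hm
  rw [hWt]
  nlinarith

lemma tendsto_fst_zero (sol : IsLogSteadySol m H W) (hm : 0 ≤ m) {a : ℝ} (hHa : H a < 1)
    (hWa : W a < 0) : Tendsto H atTop (𝓝 0) := by
  obtain ⟨ε, hε, hε_lt⟩ : ∃ ε > 0, ε < min (-W a) (1 - H a) :=
    exists_between (lt_min (neg_pos.2 hWa) (sub_pos.2 hHa))
  obtain ⟨hεW, hεH⟩ := lt_min_iff.1 hε_lt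
  have hW : ∀ t ≥ a, W t ≤ -ε := sol.snd_le_neg hm hε (by linarith) (by linarith)
  have hlog : Tendsto (fun t ↦ Real.log (H t)) atTop atBot :=
    tendsto_atBot_of_deriv_le_neg hε (.of_forall sol.hasDerivAt_log_fst)
      ((eventually_ge_atTop a).mono hW)
  exact (Real.tendsto_exp_atBot.comp hlog).congr fun t ↦ Real.exp_log (sol.pos t)

lemma eventually_snd_le (sol : IsLogSteadySol m H W) (hm : 0 < m)
    (hH : Tendsto H atTop (𝓝 0)) {δ : ℝ} (hδ : 0 < δ) : ∀ᶠ t in atTop, W t ≤ -1 + δ := by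
  refine eventually_le_of_deriv_le_neg one_half_pos (.of_forall sol.hasDerivAt_snd) ?_
  filter_upwards [hH.eventually_le_const (show 0 < m * δ / (m + 2) by positivity)] with t hHt hWt
  have hforce : m + 2 ≤ m / H t * (1 + W t) := calc
    m + 2 ≤ m * δ / H t := by
      rwa [le_div_iff₀ (sol.pos t), mul_comm, ← le_div_iff₀ (by positivity)]
    _ = m / H t * δ := by ring
    _ ≤ m / H t * (1 + W t) :=
      mul_le_mul_of_nonneg_left (by linarith) (div_pos hm (sol.pos t)).le
  nlinarith [sq_nonneg (W t - 1)]

lemma hasDerivAt_neg_fst_mul_snd_add (sol : IsLogSteadySol m H W) (k t : ℝ) :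
    HasDerivAt (fun s ↦ -(H s * (W s + k)))
      (m * (1 + W t) / 2 - H t * (W t ^ 2 + 2 * (1 + k) * W t + m) / 2) t := by
  refine ((sol.hasDerivAt_fst t).mul ((sol.hasDerivAt_snd t).add_const k)).neg.congr_deriv ?_
  have := (sol.pos t).ne'
  field_simp
  ring

lemma eventually_le_snd (sol : IsLogSteadySol m H W) (hm : 0 < m)
    (hH : Tendsto H atTop (𝓝 0)) {δ : ℝ} (hδ : 0 < δ) : ∀ᶠ t in atTop, -1 - δ ≤ W t := by
  have hle : ∀ᶠ t in atTop, -(H t * (W t + (1 + δ))) ≤ 0 := by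
    refine eventually_le_of_deriv_le_neg (show 0 < m * δ / 4 by positivity)
      (.of_forall (sol.hasDerivAt_neg_fst_mul_snd_add (1 + δ))) ?_
    filter_upwards [hH.eventually_le_const (show 0 < m * δ / 2 / (2 + δ) ^ 2 by positivity)]
      with t hHt hnonneg
    have hWt : W t + (1 + δ) ≤ 0 :=
      nonpos_of_mul_nonpos_right (neg_nonneg.1 hnonneg) (sol.pos t)
    have hsmall : H t * (2 + δ) ^ 2 ≤ m * δ / 2 := (le_div_iff₀ (by positivity)).1 hHt
    have hsquare : -(H t * (2 + δ) ^ 2) ≤ H t * (W t ^ 2 + 2 * (1 + (1 + δ)) * W t + m) := by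
      rw [← mul_neg]
      exact mul_le_mul_of_nonneg_left (by nlinarith [sq_nonneg (W t + (2 + δ))]) (sol.pos t).le
    have hdrift : m * (1 + W t) ≤ m * -δ := mul_le_mul_of_nonneg_left (by linarith) hm.le
    linarith
  filter_upwards [hle] with t ht
  linarith [nonneg_of_mul_nonneg_right (neg_nonpos.1 ht) (sol.pos t)]

lemma tendsto_snd_neg_one (sol : IsLogSteadySol m H W) (hm : 0 < m)
    (hH : Tendsto H atTop (𝓝 0)) : Tendsto W atTop (𝓝 (-1)) := by
  refine tendsto_order.2 ⟨fun b hb ↦ ?_, fun b hb ↦ ?_⟩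
  · filter_upwards [sol.eventually_le_snd hm hH (δ := (-1 - b) / 2) (by linarith)] with t ht
    linarith
  · filter_upwards [sol.eventually_snd_le hm hH (δ := (b + 1) / 2) (by linarith)] with t ht
    linarith

end IsLogSteadySol

/-- `h` is a positive, twice differentiable solution of the steady equation on `(0, ∞)`, with no
condition at `r = 0` and with a real parameter `m` in place of `n - 1`. -/
structure IsPosSteadySol (m : ℝ) (h : ℝ → ℝ) : Prop where
  differentiableOn : DifferentiableOn ℝ h (Ioi 0)
  differentiableOn_deriv : DifferentiableOn ℝ (deriv h) (Ioi 0)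
  pos : ∀ r, 0 < r → 0 < h r
  steady_eq : ∀ r, 0 < r → 2 * r ^ 2 * h r * deriv (deriv h) r =
    m * h r * (h r - 1) + r * deriv h r * (r * deriv h r - m)

lemma IsPosSteadySol.isLogSteadySol {m : ℝ} {h : ℝ → ℝ} (sol : IsPosSteadySol m h) :
    IsLogSteadySol m (fun t ↦ h (Real.exp t))
      (fun t ↦ Real.exp t * deriv h (Real.exp t) / h (Real.exp t)) := by
  have hexp := Real.exp_pos
  have hpos : ∀ t, 0 < h (Real.exp t) := fun t ↦ sol.pos _ (hexp t)
  have hderiv : ∀ t, HasDerivAt (fun s ↦ h (Real.exp s))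
      (deriv h (Real.exp t) * Real.exp t) t := fun t ↦
    (sol.differentiableOn.hasDerivAt (Ioi_mem_nhds (hexp t))).comp t (Real.hasDerivAt_exp t)
  have hderiv₂ : ∀ t, HasDerivAt (fun s ↦ deriv h (Real.exp s))
      (deriv (deriv h) (Real.exp t) * Real.exp t) t := fun t ↦
    (sol.differentiableOn_deriv.hasDerivAt (Ioi_mem_nhds (hexp t))).comp t (Real.hasDerivAt_exp t)
  refine ⟨hpos, fun t ↦ (hderiv t).congr_deriv ?_, fun t ↦
    (((Real.hasDerivAt_exp t).mul (hderiv₂ t)).div (hderiv t) (hpos t).ne').congr_deriv ?_⟩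
  · rw [mul_div_cancel₀ _ (hpos t).ne', mul_comm]
  · have hne := (hpos t).ne'
    simp only [Pi.mul_apply]
    field_simp
    linear_combination sol.steady_eq _ (hexp t)

lemma IsSteadySol.isPosSteadySol {n : ℕ} {μ₁ : ℝ} {h : ℝ → ℝ} (sol : IsSteadySol n μ₁ h) :
    IsPosSteadySol ((n : ℝ) - 1) h where
  differentiableOn := sol.1.differentiableOn two_ne_zero
  differentiableOn_deriv :=
    (sol.1.deriv_of_isOpen isOpen_Ioi one_add_one_eq_two.le).differentiableOn one_ne_zero
  pos r hr := (sol.2.2.1 r hr).2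
  steady_eq r hr := (sol.2.2.1 r hr).1

lemma IsSteadySol.exists_lt_one_and_deriv_neg_s5 {n : ℕ} {μ₁ : ℝ} {h : ℝ → ℝ}
    (sol : IsSteadySol n μ₁ h) (hμ : μ₁ < 0) : ∃ r > 0, h r < 1 ∧ deriv h r < 0 := by
  obtain ⟨-, hC1, -, h_zero, hderiv_zero⟩ := sol
  simpa only [h_zero] using exists_gt_lt_and_deriv_neg hC1 (hderiv_zero.trans_lt hμ)

theorem steady_log_derivative_limit_general {m : ℝ} (hm : 0 < m) {h : ℝ → ℝ}
    (sol : IsPosSteadySol m h) {r₀ : ℝ} (hr₀ : 0 < r₀) (hlt : h r₀ < 1) (hneg : deriv h r₀ < 0) :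
    Tendsto (fun r ↦ r * deriv h r / h r) atTop (𝓝 (-1)) := by
  have logSol := sol.isLogSteadySol
  have hH : Tendsto (fun t ↦ h (Real.exp t)) atTop (𝓝 0) := by
    refine logSol.tendsto_fst_zero hm.le (a := Real.log r₀) ?_ ?_ <;>
      simp only [Real.exp_log hr₀]
    · exact hlt
    · exact div_neg_of_neg_of_pos (mul_neg_of_pos_of_neg hr₀ hneg) (sol.pos r₀ hr₀)
  refine ((logSol.tendsto_snd_neg_one hm hH).comp Real.tendsto_log_atTop).congr' ?_
  filter_upwards [eventually_gt_atTop 0] with r hr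
  simp only [Function.comp_apply, Real.exp_log hr]

theorem steady_log_derivative_limit (μ₁ : ℝ) (n : ℕ) (hμ : μ₁ < 0) (hn2 : 2 ≤ n)
    (h : ℝ → ℝ) (hsol : IsSteadySol n μ₁ h) :
    Filter.Tendsto (fun r : ℝ => r * deriv h r / h r) Filter.atTop (nhds (-1)) := by
  obtain ⟨r₀, hr₀, hlt, hneg⟩ := hsol.exists_lt_one_and_deriv_neg_s5 hμ
  exact steady_log_derivative_limit_general (sub_pos.2 (Nat.one_lt_cast.2 hn2))
    hsol.isPosSteadySol hr₀ hlt hneg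
end

section
/- Let λ > 0, let n ≥ 2 be an integer, and suppose 0 < μ₁ < λ/n. Suppose h ∈ C²((0,∞)) ∩ C¹([0,∞)) is a solution of 2r²h(r)h''(r) = (n-1)h(r)(h(r)-1) + r h'(r)(r h'(r) - λr - (n-1)), h(r) > 0 for r > 0, with h(0) = 1 and h'(0) = μ₁. Then h'(r) → 0 as r → ∞, the limit lim_{r→∞} h(r) exists and lies in (1,∞), and 1 < h(r) ≤ 1 + μ₁ r for all r > 0. -/
open Set Filter Topology

/-- `h` is a solution of the initial value problem
`2r²h h'' = (n-1)h(h-1) + r h'(r h' - λr - (n-1))`, `h > 0` on `(0,∞)`,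
with `h ∈ C²((0,∞)) ∩ C¹([0,∞))`, `h(0) = 1` and `h'(0) = μ₁`. -/
def IsSol (n : ℕ) (lam μ₁ : ℝ) (h : ℝ → ℝ) : Prop :=
  ContDiffOn ℝ 2 h (Set.Ioi 0) ∧ ContDiffOn ℝ 1 h (Set.Ici 0) ∧
  (∀ r : ℝ, 0 < r →
    2 * r ^ 2 * h r * deriv (deriv h) r =
      ((n : ℝ) - 1) * h r * (h r - 1) +
        r * deriv h r * (r * deriv h r - lam * r - ((n : ℝ) - 1)) ∧ 0 < h r) ∧
  h 0 = 1 ∧ derivWithin h (Set.Ici 0) 0 = μ₁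

/-!
Write `w r = (h r - 1) / r` for the slope of the chord from `0`, and for a parameter `ν` set
`M = (2 h' - 2 λ + (n - 1) (w + ν)) / √h`. The substitution `s = √h` removes the term quadratic
in `h'` from the equation, and integrating what remains gives
`M' = -(n - 1) h' (ν - w) / (2 h √h)`. Since `h' > 0` (at a first zero of `h'` the equation would
force `h'' > 0`), `M` decreases as long as `w ≤ ν`, and if `ν ≥ μ` its limit at `0` is at most
`-2 (λ - n ν)`. Thus
`2 h' + (n - 1) (w + ν) ≤ 2 λ - 2 (λ - n ν) √h`.
For `μ < ν < λ / n` this yields `h' < ν` wherever `w` would reach `ν` for the first time, so `w`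
never does; letting `ν → μ` gives `w ≤ μ`. The inequality also bounds `√h`, so `h` converges, and
so does the bounded monotone `M`. Therefore `h'` converges, necessarily to `0`.
-/

lemma exists_first_zero {f : ℝ → ℝ} {a b : ℝ} (hf : ContinuousOn f (Ioi a))
    (hpos : ∀ᶠ r in 𝓝[>] a, 0 < f r) (hab : a < b) (hb : f b ≤ 0) :
    ∃ r, a < r ∧ f r = 0 ∧ ∀ s ∈ Ioo a r, 0 < f s := by
  obtain ⟨c, hac, hc⟩ := mem_nhdsGT_iff_exists_Ioc_subset.1 hpos
  have hcb : c ≤ b := not_lt.1 fun hbc => (hc ⟨hab, hbc.le⟩).not_ge hb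
  have hcont : ContinuousOn f (Icc c b) := hf.mono fun s hs => lt_of_lt_of_le hac hs.1
  have hcompact : IsCompact (Icc c b ∩ f ⁻¹' Iic 0) :=
    isCompact_Icc.of_isClosed_subset
      (hcont.preimage_isClosed_of_isClosed isClosed_Icc isClosed_Iic) inter_subset_left
  obtain ⟨r, ⟨hr, hfr⟩, hleast⟩ :=
    hcompact.exists_isLeast ⟨b, right_mem_Icc.2 hcb, mem_Iic.2 hb⟩
  have har : a < r := lt_of_lt_of_le hac hr.1
  have hbefore : ∀ s ∈ Ioo a r, 0 < f s := fun s hs => by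
    rcases le_or_gt s c with hsc | hcs
    · exact hc ⟨hs.1, hsc⟩
    · exact not_le.1 fun hfs => (hleast ⟨⟨hcs.le, hs.2.le.trans hr.2⟩, hfs⟩).not_gt hs.2
  have hleft : Tendsto f (𝓝[<] r) (𝓝 (f r)) :=
    (hf.continuousAt (Ioi_mem_nhds har)).continuousWithinAt
  refine ⟨r, har, le_antisymm hfr (ge_of_tendsto hleft ?_), hbefore⟩
  filter_upwards [Ioo_mem_nhdsLT har] with s hs using (hbefore s hs).le

lemma pos_of_deriv_pos_at_first_zero {f : ℝ → ℝ} {a : ℝ} (hf : ContinuousOn f (Ioi a))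
    (hpos : ∀ᶠ r in 𝓝[>] a, 0 < f r)
    (hzero : ∀ r, a < r → f r = 0 → (∀ s ∈ Ioo a r, 0 < f s) → 0 < deriv f r)
    {r : ℝ} (hr : a < r) : 0 < f r := by
  by_contra! hneg
  obtain ⟨z, haz, hfz, hbefore⟩ := exists_first_zero hf hpos hr hneg
  have hsign : ∀ᶠ s in 𝓝[<] z, SignType.sign (f s) = SignType.sign (s - z) :=
    nhdsWithin_le_nhds
      (eventually_nhdsWithin_sign_eq_of_deriv_pos (hzero z haz hfz hbefore) hfz)
  obtain ⟨s, hs, hsz⟩ := (hsign.and (Ioo_mem_nhdsLT haz)).exists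
  rw [sign_pos (hbefore s hsz), sign_neg (sub_neg.2 hsz.2)] at hs
  exact absurd hs (by decide)

lemma exists_tendsto_atTop_of_monotoneOn_Ioi {f : ℝ → ℝ} {a B : ℝ} (hf : MonotoneOn f (Ioi a))
    (hB : ∀ r, a < r → f r ≤ B) : ∃ l, Tendsto f atTop (𝓝 l) := by
  have hmem : ∀ r, max r (a + 1) ∈ Ioi a := fun r => lt_max_of_lt_right (lt_add_one a)
  have hmono : Monotone fun r => f (max r (a + 1)) := fun r s hrs =>
    hf (hmem r) (hmem s) (max_le_max_right _ hrs)
  have hbdd : BddAbove (range fun r => f (max r (a + 1))) :=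
    ⟨B, forall_mem_range.2 fun r => hB _ (hmem r)⟩
  refine ⟨_, (tendsto_atTop_ciSup hmono hbdd).congr' ?_⟩
  filter_upwards [eventually_ge_atTop (a + 1)] with r hr
  rw [max_eq_left hr]

lemma eq_zero_of_tendsto_atTop_of_tendsto_deriv {f f' : ℝ → ℝ} {c l : ℝ}
    (hf : ∀ᶠ r in atTop, HasDerivAt f (f' r) r) (hlim : Tendsto f atTop (𝓝 c))
    (hlim' : Tendsto f' atTop (𝓝 l)) : l = 0 := by
  obtain ⟨a, ha⟩ := eventually_atTop.1 hf
  have hmean : ∀ r : ℝ, ∃ x, r < x ∧ (a ≤ r → f' x = f (r + 1) - f r) := fun r => by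
    by_cases har : a ≤ r
    · have hderiv : ∀ x, r ≤ x → HasDerivAt f (f' x) x := fun x hx => ha x (har.trans hx)
      obtain ⟨x, hx, hfx⟩ := exists_hasDerivAt_eq_slope f f' (lt_add_one r)
        (fun x hx => (hderiv x hx.1).continuousAt.continuousWithinAt)
        (fun x hx => hderiv x hx.1.le)
      exact ⟨x, hx.1, fun _ => by rw [hfx, add_sub_cancel_left, div_one]⟩
    · exact ⟨r + 1, lt_add_one r, fun h => absurd h har⟩
  choose x hx hfx using hmean
  have hxtop : Tendsto x atTop atTop := tendsto_atTop_mono (fun r => (hx r).le) tendsto_id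
  have hdiff : Tendsto (fun r => f (r + 1) - f r) atTop (𝓝 0) := by
    simpa using (hlim.comp (tendsto_atTop_add_const_right atTop 1 tendsto_id)).sub hlim
  refine tendsto_nhds_unique (hlim'.comp hxtop) (hdiff.congr' ?_)
  filter_upwards [eventually_ge_atTop a] with r hr using (hfx r hr).symm

lemma hasDerivAt_slope_right {f : ℝ → ℝ} {f' a r : ℝ} (hf : HasDerivAt f f' r) (hr : r ≠ a) :
    HasDerivAt (slope f a) ((f' - slope f a r) / (r - a)) r := by
  have hsub : r - a ≠ 0 := sub_ne_zero.2 hr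
  have hquot := (hf.sub_const (f a)).fun_div ((hasDerivAt_id' r).sub_const a) hsub
  rw [slope_fun_def_field]
  refine hquot.congr_deriv ?_
  field_simp

/-- Solutions of the initial value problem of `IsSol` with a real parameter `n` in place of the
dimension. -/
structure IsRealDimSol (n lam μ : ℝ) (h : ℝ → ℝ) : Prop where
  contDiffOn_Ioi : ContDiffOn ℝ 2 h (Ioi 0)
  contDiffOn_Ici : ContDiffOn ℝ 1 h (Ici 0)
  ode : ∀ r, 0 < r → 2 * r ^ 2 * h r * deriv (deriv h) r =
    (n - 1) * h r * (h r - 1) + r * deriv h r * (r * deriv h r - lam * r - (n - 1))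
  pos : ∀ r, 0 < r → 0 < h r
  apply_zero : h 0 = 1
  derivWithin_zero : derivWithin h (Ici 0) 0 = μ

lemma IsSol.isRealDimSol {n : ℕ} {lam μ : ℝ} {h : ℝ → ℝ} (hsol : IsSol n lam μ h) :
    IsRealDimSol n lam μ h :=
  let ⟨hC2, hC1, hode, h0, hμ⟩ := hsol
  ⟨hC2, hC1, fun r hr => (hode r hr).1, fun r hr => (hode r hr).2, h0, hμ⟩

/-- The quantity `(2 h' - 2 λ + (n - 1) (w + ν)) / √h`, where `w` is the slope of the chord of `h`
from `0`; for a solution with `h' > 0` it decreases while `w ≤ ν`. -/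
noncomputable def lyapunov (n lam ν : ℝ) (h : ℝ → ℝ) (r : ℝ) : ℝ :=
  (2 * deriv h r - 2 * lam + (n - 1) * (slope h 0 r + ν)) / √(h r)

namespace IsRealDimSol

variable {n lam μ ν r : ℝ} {h : ℝ → ℝ}

lemma hasDerivAt (hsol : IsRealDimSol n lam μ h) (hr : 0 < r) : HasDerivAt h (deriv h r) r :=
  ((hsol.contDiffOn_Ioi.contDiffAt (Ioi_mem_nhds hr)).differentiableAt two_ne_zero).hasDerivAt

lemma hasDerivAt_deriv (hsol : IsRealDimSol n lam μ h) (hr : 0 < r) :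
    HasDerivAt (deriv h) (deriv (deriv h) r) r := by
  have hC1 : ContDiffOn ℝ 1 (deriv h) (Ioi 0) :=
    hsol.contDiffOn_Ioi.deriv_of_isOpen isOpen_Ioi (by norm_num)
  exact ((hC1.contDiffAt (Ioi_mem_nhds hr)).differentiableAt one_ne_zero).hasDerivAt

lemma hasDerivAt_slope (hsol : IsRealDimSol n lam μ h) (hr : 0 < r) :
    HasDerivAt (slope h 0) ((deriv h r - slope h 0 r) / r) r := by
  simpa only [sub_zero] using hasDerivAt_slope_right (hsol.hasDerivAt hr) hr.ne'

lemma slope_eq (hsol : IsRealDimSol n lam μ h) (r : ℝ) : slope h 0 r = (h r - 1) / r := by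
  rw [slope_def_field, hsol.apply_zero, sub_zero]

lemma tendsto_nhdsGT_zero (hsol : IsRealDimSol n lam μ h) : Tendsto h (𝓝[>] 0) (𝓝 1) := by
  have hcont : ContinuousWithinAt h (Ioi 0) 0 :=
    (hsol.contDiffOn_Ici.continuousOn 0 self_mem_Ici).mono Ioi_subset_Ici_self
  simpa only [ContinuousWithinAt, hsol.apply_zero] using hcont

lemma tendsto_deriv_nhdsGT_zero (hsol : IsRealDimSol n lam μ h) :
    Tendsto (deriv h) (𝓝[>] 0) (𝓝 μ) := by
  have hcont : ContinuousWithinAt (derivWithin h (Ici 0)) (Ioi 0) 0 :=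
    (hsol.contDiffOn_Ici.continuousOn_derivWithin (uniqueDiffOn_Ici 0) le_rfl 0
      self_mem_Ici).mono Ioi_subset_Ici_self
  rw [ContinuousWithinAt, hsol.derivWithin_zero] at hcont
  refine hcont.congr' ?_
  filter_upwards [self_mem_nhdsWithin] with r hr using derivWithin_of_mem_nhds (Ici_mem_nhds hr)

lemma tendsto_slope_nhdsGT_zero (hsol : IsRealDimSol n lam μ h) :
    Tendsto (slope h 0) (𝓝[>] 0) (𝓝 μ) := by
  have hderiv : HasDerivWithinAt h μ (Ici 0) 0 := hsol.derivWithin_zero ▸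
    (hsol.contDiffOn_Ici.differentiableOn one_ne_zero 0 self_mem_Ici).hasDerivWithinAt
  exact (hasDerivWithinAt_iff_tendsto_slope' self_notMem_Ioi).1
    (hderiv.mono Ioi_subset_Ici_self)

lemma one_lt_of_deriv_pos (hsol : IsRealDimSol n lam μ h) (hr : 0 < r)
    (hpos : ∀ s ∈ Ioo 0 r, 0 < deriv h s) : 1 < h r := by
  have hmono : StrictMonoOn h (Icc 0 r) :=
    strictMonoOn_of_deriv_pos (convex_Icc 0 r)
      (hsol.contDiffOn_Ici.continuousOn.mono Icc_subset_Ici_self)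
      (by simpa only [interior_Icc] using hpos)
  simpa only [hsol.apply_zero] using
    hmono (left_mem_Icc.2 hr.le) (right_mem_Icc.2 hr.le) hr

lemma deriv_deriv_pos_of_deriv_eq_zero (hsol : IsRealDimSol n lam μ h) (hn : 1 < n) (hr : 0 < r)
    (hzero : deriv h r = 0) (hone : 1 < h r) : 0 < deriv (deriv h) r := by
  have hh := hsol.pos r hr
  have hode := hsol.ode r hr
  rw [hzero, mul_zero, zero_mul, add_zero] at hode
  have hrhs : 0 < (n - 1) * h r * (h r - 1) :=
    mul_pos (mul_pos (sub_pos.2 hn) hh) (sub_pos.2 hone)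
  exact pos_of_mul_pos_right (hode ▸ hrhs) (by positivity)

lemma deriv_pos (hsol : IsRealDimSol n lam μ h) (hn : 1 < n) (hμ : 0 < μ) (hr : 0 < r) :
    0 < deriv h r :=
  pos_of_deriv_pos_at_first_zero
    (fun _ hs => (hsol.hasDerivAt_deriv hs).continuousAt.continuousWithinAt)
    (hsol.tendsto_deriv_nhdsGT_zero.eventually_const_lt hμ)
    (fun _ hs hzero hbefore =>
      hsol.deriv_deriv_pos_of_deriv_eq_zero hn hs hzero (hsol.one_lt_of_deriv_pos hs hbefore)) hr

lemma one_lt (hsol : IsRealDimSol n lam μ h) (hn : 1 < n) (hμ : 0 < μ) (hr : 0 < r) : 1 < h r :=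
  hsol.one_lt_of_deriv_pos hr fun _ hs => hsol.deriv_pos hn hμ hs.1

lemma slope_pos (hsol : IsRealDimSol n lam μ h) (hn : 1 < n) (hμ : 0 < μ) (hr : 0 < r) :
    0 < slope h 0 r := by
  rw [hsol.slope_eq]
  exact div_pos (sub_pos.2 (hsol.one_lt hn hμ hr)) hr

lemma monotoneOn (hsol : IsRealDimSol n lam μ h) (hn : 1 < n) (hμ : 0 < μ) :
    MonotoneOn h (Ioi 0) :=
  (strictMonoOn_of_deriv_pos (convex_Ioi 0)
    (fun _ hs => (hsol.hasDerivAt hs).continuousAt.continuousWithinAt)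
    (fun _ hs => hsol.deriv_pos hn hμ (interior_subset hs))).monotoneOn

lemma hasDerivAt_lyapunov (hsol : IsRealDimSol n lam μ h) (ν : ℝ) (hr : 0 < r) :
    HasDerivAt (lyapunov n lam ν h)
      (-((n - 1) * deriv h r * (ν - slope h 0 r) / (2 * h r * √(h r)))) r := by
  have hh := hsol.pos r hr
  have hsqrt : 0 < √(h r) := Real.sqrt_pos.2 hh
  have hnum := (((hsol.hasDerivAt_deriv hr).const_mul 2).sub_const (2 * lam)).fun_add
    (((hsol.hasDerivAt_slope hr).add_const ν).const_mul (n - 1))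
  refine (hnum.fun_div ((hsol.hasDerivAt hr).sqrt hh.ne') hsqrt.ne').congr_deriv ?_
  have hslope : slope h 0 r * r = h r - 1 := by rw [hsol.slope_eq, div_mul_cancel₀ _ hr.ne']
  have hode : 2 * r * h r * deriv (deriv h) r =
      (n - 1) * h r * slope h 0 r + deriv h r * (r * deriv h r - lam * r - (n - 1)) := by
    rw [hsol.slope_eq]
    field_simp
    linear_combination hsol.ode r hr
  field_simp
  rw [Real.sq_sqrt hh.le]
  linear_combination 2 * h r * hode - 2 * h r * (n - 1) * deriv h r * hslope

lemma tendsto_lyapunov_nhdsGT_zero (hsol : IsRealDimSol n lam μ h) (ν : ℝ) :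
    Tendsto (lyapunov n lam ν h) (𝓝[>] 0) (𝓝 (2 * μ - 2 * lam + (n - 1) * (μ + ν))) := by
  have hnum := ((hsol.tendsto_deriv_nhdsGT_zero.const_mul 2).sub_const (2 * lam)).add
    ((hsol.tendsto_slope_nhdsGT_zero.add_const ν).const_mul (n - 1))
  have hsqrt : Tendsto (fun r => √(h r)) (𝓝[>] 0) (𝓝 1) := by
    simpa only [Real.sqrt_one] using hsol.tendsto_nhdsGT_zero.sqrt
  exact div_one (2 * μ - 2 * lam + (n - 1) * (μ + ν)) ▸ hnum.div hsqrt one_ne_zero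

lemma antitoneOn_lyapunov (hsol : IsRealDimSol n lam μ h) (hn : 1 < n) (hμ : 0 < μ) {s : Set ℝ}
    (hs : Convex ℝ s) (hs0 : s ⊆ Ioi 0) (hν : ∀ t ∈ s, slope h 0 t ≤ ν) :
    AntitoneOn (lyapunov n lam ν h) s := by
  refine antitoneOn_of_hasDerivWithinAt_nonpos hs
    (fun t ht => (hsol.hasDerivAt_lyapunov ν (hs0 ht)).continuousAt.continuousWithinAt)
    (fun t ht => (hsol.hasDerivAt_lyapunov ν (hs0 (interior_subset ht))).hasDerivWithinAt)
    fun t ht => ?_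
  have ht0 : 0 < t := hs0 (interior_subset ht)
  have hderiv := hsol.deriv_pos hn hμ ht0
  have hh := hsol.pos t ht0
  have hgap : 0 ≤ ν - slope h 0 t := sub_nonneg.2 (hν t (interior_subset ht))
  exact neg_nonpos.2 (div_nonneg
    (mul_nonneg (mul_nonneg (sub_nonneg.2 hn.le) hderiv.le) hgap) (by positivity))

lemma two_mul_deriv_add_le (hsol : IsRealDimSol n lam μ h) (hn : 1 < n) (hμ : 0 < μ) (hμν : μ ≤ ν)
    (hr : 0 < r) (hν : ∀ s ∈ Ioc 0 r, slope h 0 s ≤ ν) :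
    2 * deriv h r + (n - 1) * (slope h 0 r + ν) ≤ 2 * lam - 2 * (lam - n * ν) * √(h r) := by
  have hanti := hsol.antitoneOn_lyapunov hn hμ (convex_Ioc 0 r) (fun s hs => hs.1) hν
  have hinit : lyapunov n lam ν h r ≤ 2 * μ - 2 * lam + (n - 1) * (μ + ν) := by
    refine ge_of_tendsto (hsol.tendsto_lyapunov_nhdsGT_zero ν) ?_
    filter_upwards [Ioc_mem_nhdsGT hr] with s hs using hanti hs (right_mem_Ioc.2 hr) hs.2
  have hle : lyapunov n lam ν h r ≤ -(2 * (lam - n * ν)) := by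
    linarith [mul_le_mul_of_nonneg_left hμν (by linarith : 0 ≤ n + 1)]
  rw [lyapunov, div_le_iff₀ (Real.sqrt_pos.2 (hsol.pos r hr))] at hle
  linarith

lemma slope_lt (hsol : IsRealDimSol n lam μ h) (hn : 1 < n) (hμ : 0 < μ) (hμν : μ < ν)
    (hν : n * ν < lam) (hr : 0 < r) : slope h 0 r < ν := by
  have hderiv : ∀ s, 0 < s →
      HasDerivAt (fun t => ν - slope h 0 t) (-((deriv h s - slope h 0 s) / s)) s :=
    fun s hs => (hsol.hasDerivAt_slope hs).const_sub ν
  refine sub_pos.1 (pos_of_deriv_pos_at_first_zero (f := fun t => ν - slope h 0 t)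
    (fun s hs => (hderiv s hs).continuousAt.continuousWithinAt) ?_
    (fun s hs hzero hbefore => ?_) hr)
  · filter_upwards [hsol.tendsto_slope_nhdsGT_zero.eventually_lt_const hμν] with s hs
      using sub_pos.2 hs
  · have hslope : slope h 0 s = ν := (sub_eq_zero.1 hzero).symm
    have hle : ∀ t ∈ Ioc 0 s, slope h 0 t ≤ ν := fun t ht => by
      rcases ht.2.eq_or_lt with rfl | hts
      · exact hslope.le
      · exact (sub_pos.1 (hbefore t ⟨ht.1, hts⟩)).le
    have hineq := hsol.two_mul_deriv_add_le hn hμ hμν.le hs hle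
    have hsqrt : 1 < √(h s) := Real.lt_sqrt_of_sq_lt (by simpa using hsol.one_lt hn hμ hs)
    have hlt : deriv h s < ν := by
      rw [hslope] at hineq
      linarith [mul_pos (sub_pos.2 hν) (sub_pos.2 hsqrt)]
    rw [(hderiv s hs).deriv, hslope]
    exact neg_pos.2 (div_neg_of_neg_of_pos (sub_neg.2 hlt) hs)

lemma slope_le (hsol : IsRealDimSol n lam μ h) (hn : 1 < n) (hμ : 0 < μ) (hμlam : n * μ < lam)
    (hr : 0 < r) : slope h 0 r ≤ μ := by
  by_contra! hlt
  have hμn : μ < lam / n := (lt_div_iff₀' (one_pos.trans hn)).2 hμlam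
  obtain ⟨ν, hμν, hν⟩ := exists_between (lt_min hlt hμn)
  have hνlam : n * ν < lam := (lt_div_iff₀' (one_pos.trans hn)).1 (hν.trans_le (min_le_right _ _))
  exact (hsol.slope_lt hn hμ hμν hνlam hr).not_gt (hν.trans_le (min_le_left _ _))

lemma le_one_add_mul (hsol : IsRealDimSol n lam μ h) (hn : 1 < n) (hμ : 0 < μ)
    (hμlam : n * μ < lam) (hr : 0 < r) : h r ≤ 1 + μ * r := by
  have hle := hsol.slope_le hn hμ hμlam hr
  rw [hsol.slope_eq, div_le_iff₀ hr] at hle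
  linarith

lemma sqrt_le (hsol : IsRealDimSol n lam μ h) (hn : 1 < n) (hμ : 0 < μ) (hμlam : n * μ < lam)
    (hr : 0 < r) : √(h r) ≤ lam / (lam - n * μ) := by
  have hineq := hsol.two_mul_deriv_add_le hn hμ le_rfl hr
    fun s hs => hsol.slope_le hn hμ hμlam hs.1
  have hsum : 0 < (n - 1) * (slope h 0 r + μ) :=
    mul_pos (sub_pos.2 hn) (add_pos (hsol.slope_pos hn hμ hr) hμ)
  rw [le_div_iff₀ (sub_pos.2 hμlam)]
  linarith [hsol.deriv_pos hn hμ hr]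

lemma exists_tendsto_atTop (hsol : IsRealDimSol n lam μ h) (hn : 1 < n) (hμ : 0 < μ)
    (hμlam : n * μ < lam) : ∃ c, 1 < c ∧ Tendsto h atTop (𝓝 c) := by
  have hmono := hsol.monotoneOn hn hμ
  obtain ⟨c, hc⟩ := exists_tendsto_atTop_of_monotoneOn_Ioi hmono
    fun r hr => (Real.sqrt_le_iff.1 (hsol.sqrt_le hn hμ hμlam hr)).2
  refine ⟨c, (hsol.one_lt hn hμ one_pos).trans_le (ge_of_tendsto hc ?_), hc⟩
  filter_upwards [eventually_ge_atTop 1] with r hr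
    using hmono (mem_Ioi.2 one_pos) (mem_Ioi.2 (one_pos.trans_le hr)) hr

lemma neg_two_mul_le_lyapunov (hsol : IsRealDimSol n lam μ h) (hn : 1 < n) (hμ : 0 < μ)
    (hlam : 0 ≤ lam) (hr : 0 < r) : -(2 * lam) ≤ lyapunov n lam μ h r := by
  have hsqrt : 1 ≤ √(h r) := Real.one_le_sqrt.2 (hsol.one_lt hn hμ hr).le
  have hsum : 0 < (n - 1) * (slope h 0 r + μ) :=
    mul_pos (sub_pos.2 hn) (add_pos (hsol.slope_pos hn hμ hr) hμ)
  rw [lyapunov, le_div_iff₀ (one_pos.trans_le hsqrt)]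
  linarith [hsol.deriv_pos hn hμ hr, mul_nonneg hlam (sub_nonneg.2 hsqrt)]

lemma exists_tendsto_lyapunov_atTop (hsol : IsRealDimSol n lam μ h) (hn : 1 < n) (hμ : 0 < μ)
    (hμlam : n * μ < lam) : ∃ m, Tendsto (lyapunov n lam μ h) atTop (𝓝 m) := by
  have hlam : 0 ≤ lam := (mul_pos (one_pos.trans hn) hμ).le.trans hμlam.le
  have hanti := hsol.antitoneOn_lyapunov hn hμ (convex_Ioi 0) Subset.rfl
    fun r hr => hsol.slope_le hn hμ hμlam hr
  obtain ⟨m, hm⟩ := exists_tendsto_atTop_of_monotoneOn_Ioi hanti.neg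
    fun r hr => neg_le.1 (hsol.neg_two_mul_le_lyapunov hn hμ hlam hr)
  exact ⟨-m, by simpa only [Pi.neg_apply, neg_neg] using hm.neg⟩

lemma tendsto_deriv_atTop (hsol : IsRealDimSol n lam μ h) (hn : 1 < n) (hμ : 0 < μ)
    (hμlam : n * μ < lam) : Tendsto (deriv h) atTop (𝓝 0) := by
  obtain ⟨c, -, hc⟩ := hsol.exists_tendsto_atTop hn hμ hμlam
  obtain ⟨m, hm⟩ := hsol.exists_tendsto_lyapunov_atTop hn hμ hμlam
  have hslope : Tendsto (slope h 0) atTop (𝓝 0) :=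
    ((hc.sub_const 1).div_atTop tendsto_id).congr fun r => (hsol.slope_eq r).symm
  have hderiv : Tendsto (deriv h) atTop
      (𝓝 ((m * √c + 2 * lam - (n - 1) * (0 + μ)) / 2)) := by
    refine ((((hm.mul hc.sqrt).add_const (2 * lam)).sub
      ((hslope.add_const μ).const_mul (n - 1))).div_const 2).congr' ?_
    filter_upwards [eventually_gt_atTop 0] with r hr
    rw [lyapunov, div_mul_cancel₀ _ (Real.sqrt_pos.2 (hsol.pos r hr)).ne']
    ring
  have hevent : ∀ᶠ r in atTop, HasDerivAt h (deriv h r) r :=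
    (eventually_gt_atTop 0).mono fun r hr => hsol.hasDerivAt hr
  rwa [eq_zero_of_tendsto_atTop_of_tendsto_deriv hevent hc hderiv] at hderiv

end IsRealDimSol

theorem expanding_small_slope_general {n lam μ : ℝ} {h : ℝ → ℝ} (hn : 1 < n) (hμ0 : 0 < μ)
    (hμ : μ < lam / n) (hsol : IsRealDimSol n lam μ h) :
    Tendsto (deriv h) atTop (𝓝 0) ∧ (∃ c : ℝ, 1 < c ∧ Tendsto h atTop (𝓝 c)) ∧
      ∀ r : ℝ, 0 < r → 1 < h r ∧ h r ≤ 1 + μ * r := by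
  have hμlam : n * μ < lam := (lt_div_iff₀' (one_pos.trans hn)).1 hμ
  exact ⟨hsol.tendsto_deriv_atTop hn hμ0 hμlam, hsol.exists_tendsto_atTop hn hμ0 hμlam,
    fun r hr => ⟨hsol.one_lt hn hμ0 hr, hsol.le_one_add_mul hn hμ0 hμlam hr⟩⟩

theorem expanding_small_slope (lam μ₁ : ℝ) (n : ℕ) (hlam : 0 < lam) (hn2 : 2 ≤ n)
    (hμ0 : 0 < μ₁) (hμ : μ₁ < lam / n)
    (h : ℝ → ℝ) (hsol : IsSol n lam μ₁ h) :
    Filter.Tendsto (deriv h) Filter.atTop (nhds 0) ∧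
    (∃ c : ℝ, 1 < c ∧ Filter.Tendsto h Filter.atTop (nhds c)) ∧
    ∀ r : ℝ, 0 < r → 1 < h r ∧ h r ≤ 1 + μ₁ * r :=
  expanding_small_slope_general (Nat.one_lt_cast.2 hn2) hμ0 hμ hsol.isRealDimSol
end

section
/- Let λ > 0, let n ≥ 2 be an integer, and suppose μ₁ < 0. Suppose h ∈ C²((0,∞)) ∩ C¹([0,∞)) is a solution of 2r²h(r)h''(r) = (n-1)h(r)(h(r)-1) + r h'(r)(r h'(r) - λr - (n-1)), h(r) > 0 for r > 0, with h(0) = 1 and h'(0) = μ₁. Then h'(r) → 0 as r → ∞ and the limit lim_{r→∞} h(r) exists and lies in (0,1). -/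
open Set Filter Topology

/-!
At a first zero of `h'` the solution has decreased from `1`, so `h < 1` there and the equation
forces `h'' < 0`; but `h'` reaches that zero from below. Hence `h' < 0` on `(0, ∞)`, and `h`
decreases to a limit `c < 1`. Divided by `2r²h`, the equation says that
`h' - (n-1)/(2r) + (λ/2) log h` is nondecreasing. This quantity is at most `(λ/2) log h < 0`, so
`log h` is bounded below, whence `c > 0`, and the quantity converges, whence `h'` converges. As `h`
itself converges, the limit of `h'` is zero.
-/

section MonotoneLimits

variable {α β : Type*} [Preorder α] [IsDirectedOrder α] [ConditionallyCompleteLinearOrder β]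
  [TopologicalSpace β] [OrderTopology β] {f : α → β} {a : α}

theorem tendsto_atTop_csSup_image_Ici (hf : MonotoneOn f (Ici a))
    (hbdd : BddAbove (f '' Ici a)) : Tendsto f atTop (𝓝 (sSup (f '' Ici a))) := by
  rw [image_eq_range] at hbdd ⊢
  exact tendsto_comp_val_Ici_atTop.1 (tendsto_atTop_ciSup (fun x y hxy ↦ hf x.2 y.2 hxy) hbdd)

theorem tendsto_atTop_csInf_image_Ici (hf : AntitoneOn f (Ici a))
    (hbdd : BddBelow (f '' Ici a)) : Tendsto f atTop (𝓝 (sInf (f '' Ici a))) :=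
  tendsto_atTop_csSup_image_Ici (β := βᵒᵈ) hf.dual_right hbdd

end MonotoneLimits

theorem eq_zero_of_tendsto_of_tendsto_hasDerivAt {E : Type*} [NormedAddCommGroup E]
    [NormedSpace ℝ E] {f f' : ℝ → E} {c L : E} (hff' : ∀ᶠ x in atTop, HasDerivAt f (f' x) x)
    (hf : Tendsto f atTop (𝓝 c)) (hf' : Tendsto f' atTop (𝓝 L)) : L = 0 := by
  refine norm_le_zero_iff.1 (le_of_forall_pos_le_add fun ε hε ↦ ?_)
  have hincrement : Tendsto (fun r ↦ ‖f (r + 1) - f r - L‖) atTop (𝓝 ‖L‖) := by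
    simpa using (((hf.comp (tendsto_atTop_add_const_right _ 1 tendsto_id)).sub hf).sub_const L).norm
  have hnear : ∀ᶠ x in atTop, ‖f' x - L‖ ≤ ε :=
    (tendsto_iff_norm_sub_tendsto_zero.1 hf').eventually_le_const hε
  rw [zero_add]
  refine le_of_tendsto hincrement ?_
  filter_upwards [eventually_forall_ge_atTop.2 (hff'.and hnear)] with r hr
  have hsub (x : ℝ) (hx : r ≤ x) : HasDerivAt (fun y ↦ f y - y • L) (f' x - L) x := by
    simpa using (hr x hx).1.fun_sub ((hasDerivAt_id x).smul_const L)
  have hmean := norm_image_sub_le_of_norm_deriv_le_segment' (b := r + 1)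
    (fun x hx ↦ (hsub x hx.1).hasDerivWithinAt) (fun x hx ↦ (hr x hx.1).2)
    (r + 1) (right_mem_Icc.2 (by linarith))
  calc ‖f (r + 1) - f r - L‖ = ‖f (r + 1) - (r + 1) • L - (f r - r • L)‖ := by
        congr 1; module
    _ ≤ ε := by simpa using hmean

theorem exists_first_eq_of_continuousOn {α β : Type*} [ConditionallyCompleteLinearOrder α]
    [TopologicalSpace α] [OrderTopology α] [DenselyOrdered α] [LinearOrder β] [TopologicalSpace β]
    [OrderClosedTopology β] {g : α → β} {a b : α} {y : β} (hab : a ≤ b)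
    (hg : ContinuousOn g (Icc a b)) (hga : g a < y) (hgb : y ≤ g b) :
    ∃ r ∈ Ioc a b, g r = y ∧ ∀ x ∈ Ico a r, g x < y := by
  have hcompact : IsCompact (Icc a b ∩ g ⁻¹' {y}) :=
    isCompact_Icc.of_isClosed_subset
      (hg.preimage_isClosed_of_isClosed isClosed_Icc isClosed_singleton) inter_subset_left
  obtain ⟨z, hz, hgz⟩ := intermediate_value_Icc hab hg ⟨hga.le, hgb⟩
  obtain ⟨r, ⟨⟨har, hrb⟩, hgr : g r = y⟩, hleast⟩ := hcompact.exists_isLeast ⟨z, hz, hgz⟩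
  refine ⟨r, ⟨har.lt_of_ne (by rintro rfl; exact hga.ne hgr), hrb⟩, hgr, fun x ⟨hax, hxr⟩ ↦ ?_⟩
  by_contra! hgx
  have hxb : x ≤ b := hxr.le.trans hrb
  obtain ⟨w, ⟨haw, hwx⟩, hgw⟩ :=
    intermediate_value_Icc hax (hg.mono (Icc_subset_Icc_right hxb)) ⟨hga.le, hgx⟩
  exact (hleast ⟨⟨haw, hwx.trans hxb⟩, hgw⟩).not_gt (hwx.trans_lt hxr)

theorem neg_of_deriv_neg_at_first_zero {g : ℝ → ℝ} {a : ℝ} (hg : ContinuousOn g (Ici a))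
    (hga : g a < 0)
    (hderiv : ∀ r, a < r → g r = 0 → (∀ x ∈ Ico a r, g x < 0) → deriv g r < 0)
    {b : ℝ} (hab : a ≤ b) : g b < 0 := by
  by_contra! hgb
  obtain ⟨r, ⟨har, -⟩, hgr, hneg⟩ :=
    exists_first_eq_of_continuousOn hab (hg.mono Icc_subset_Ici_self) hga hgb
  have hsign : ∀ᶠ x in 𝓝[<] r, SignType.sign (g x) = SignType.sign (r - x) :=
    (eventually_nhdsWithin_sign_eq_of_deriv_neg (hderiv r har hgr hneg) hgr).filter_mono
      nhdsWithin_le_nhds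
  obtain ⟨x, hx, hax, hxr⟩ := (hsign.and (Ioo_mem_nhdsLT har)).exists
  rw [sign_neg (hneg x ⟨hax.le, hxr⟩), sign_pos (sub_pos.2 hxr)] at hx
  contradiction

/-- The Lyapunov function `h' - (n-1)/(2r) + (λ/2) log h` of the equation, for `r > 0`: its last two
terms are antiderivatives of the terms `(n-1)/(2r²)` and `λh'/(2h)` that have to be added to `h''`
to leave only nonnegative terms when `h > 0 ≥ h'`. -/
noncomputable def logEnergy (n : ℕ) (lam : ℝ) (h : ℝ → ℝ) (r : ℝ) : ℝ :=
  deriv h r - ((n : ℝ) - 1) / 2 * r⁻¹ + lam / 2 * Real.log (h r)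

namespace IsSol

variable {n : ℕ} {lam μ₁ : ℝ} {h : ℝ → ℝ} {a r c : ℝ}

theorem pos (hsol : IsSol n lam μ₁ h) (hr : 0 < r) : 0 < h r :=
  (hsol.2.2.1 r hr).2

theorem continuousOn (hsol : IsSol n lam μ₁ h) : ContinuousOn h (Ici 0) :=
  hsol.2.1.continuousOn

theorem hasDerivAt (hsol : IsSol n lam μ₁ h) (hr : 0 < r) : HasDerivAt h (deriv h r) r :=
  ((hsol.1.differentiableOn two_ne_zero).differentiableAt (Ioi_mem_nhds hr)).hasDerivAt

theorem hasDerivAt_deriv (hsol : IsSol n lam μ₁ h) (hr : 0 < r) :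
    HasDerivAt (deriv h) (deriv (deriv h) r) r :=
  (((hsol.1.deriv_of_isOpen (m := 1) isOpen_Ioi (by norm_num)).differentiableOn
    one_ne_zero).differentiableAt (Ioi_mem_nhds hr)).hasDerivAt

theorem deriv_deriv_neg_of_deriv_eq_zero (hsol : IsSol n lam μ₁ h) (hn : 1 < n) (hr : 0 < r)
    (hcrit : deriv h r = 0) (hlt : h r < 1) : deriv (deriv h) r < 0 := by
  obtain ⟨hode, hpos⟩ := hsol.2.2.1 r hr
  have hn' : (0 : ℝ) < n - 1 := sub_pos.2 (by exact_mod_cast hn)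
  have hrhs : 2 * r ^ 2 * h r * deriv (deriv h) r < 0 := by
    rw [hode, hcrit, mul_zero, zero_mul, add_zero]
    exact mul_neg_of_pos_of_neg (mul_pos hn' hpos) (sub_neg.2 hlt)
  exact neg_of_mul_neg_right hrhs (by positivity)

theorem deriv_neg (hsol : IsSol n lam μ₁ h) (hn : 1 < n) (hμ : μ₁ < 0) (hr : 0 < r) :
    deriv h r < 0 := by
  have hcont : ContinuousOn (derivWithin h (Ici 0)) (Ici 0) :=
    hsol.2.1.continuousOn_derivWithin (uniqueDiffOn_Ici 0) le_rfl
  have heq : EqOn (derivWithin h (Ici 0)) (deriv h) (Ioi 0) := fun x hx ↦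
    derivWithin_of_mem_nhds (Ici_mem_nhds hx)
  rw [← heq hr]
  refine neg_of_deriv_neg_at_first_zero hcont (hsol.2.2.2.2.trans_lt hμ)
    (fun s hs hzero hbefore ↦ ?_) hr.le
  have hanti : StrictAntiOn h (Icc 0 s) := by
    refine strictAntiOn_of_deriv_neg (convex_Icc 0 s)
      (hsol.continuousOn.mono Icc_subset_Ici_self) fun x hx ↦ ?_
    rw [interior_Icc] at hx
    exact heq hx.1 ▸ hbefore x ⟨hx.1.le, hx.2⟩
  have hlt : h s < 1 :=
    hsol.2.2.2.1 ▸ hanti (left_mem_Icc.2 hs.le) (right_mem_Icc.2 hs.le) hs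
  rw [(heq.eventuallyEq_of_mem (Ioi_mem_nhds hs)).deriv_eq]
  exact hsol.deriv_deriv_neg_of_deriv_eq_zero hn hs (heq hs ▸ hzero) hlt

theorem strictAntiOn (hsol : IsSol n lam μ₁ h) (hn : 1 < n) (hμ : μ₁ < 0) :
    StrictAntiOn h (Ici 0) := by
  refine strictAntiOn_of_deriv_neg (convex_Ici 0) hsol.continuousOn fun x hx ↦ ?_
  rw [interior_Ici] at hx
  exact hsol.deriv_neg hn hμ hx

theorem lt_one (hsol : IsSol n lam μ₁ h) (hn : 1 < n) (hμ : μ₁ < 0) (hr : 0 < r) : h r < 1 :=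
  hsol.2.2.2.1 ▸ hsol.strictAntiOn hn hμ self_mem_Ici hr.le hr

theorem exists_tendsto (hsol : IsSol n lam μ₁ h) (hn : 1 < n) (hμ : μ₁ < 0) :
    ∃ c, Tendsto h atTop (𝓝 c) := by
  refine ⟨_, tendsto_atTop_csInf_image_Ici (a := 1)
    ((hsol.strictAntiOn hn hμ).antitoneOn.mono (Ici_subset_Ici.2 zero_le_one)) ⟨0, ?_⟩⟩
  rintro _ ⟨r, hr, rfl⟩
  exact (hsol.pos (one_pos.trans_le hr)).le

theorem lt_one_of_tendsto (hsol : IsSol n lam μ₁ h) (hn : 1 < n) (hμ : μ₁ < 0)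
    (hc : Tendsto h atTop (𝓝 c)) : c < 1 := by
  refine (le_of_tendsto hc ?_).trans_lt (hsol.lt_one hn hμ one_pos)
  filter_upwards [eventually_ge_atTop 1] with r hr
  exact (hsol.strictAntiOn hn hμ).antitoneOn (mem_Ici.2 zero_le_one)
    (mem_Ici.2 (zero_le_one.trans hr)) hr

theorem hasDerivAt_logEnergy (hsol : IsSol n lam μ₁ h) (hr : 0 < r) :
    HasDerivAt (logEnergy n lam h)
      (((n : ℝ) - 1) * h r / (2 * r ^ 2) + deriv h r ^ 2 / (2 * h r) +
        ((n : ℝ) - 1) * -deriv h r / (2 * r * h r)) r := by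
  obtain ⟨hode, hpos⟩ := hsol.2.2.1 r hr
  refine (((hsol.hasDerivAt_deriv hr).sub ((hasDerivAt_inv hr.ne').const_mul _)).add
    (((hsol.hasDerivAt hr).log hpos.ne').const_mul _)).congr_deriv ?_
  field_simp
  linear_combination hode

theorem monotoneOn_logEnergy (hsol : IsSol n lam μ₁ h) (hn : 1 < n) (hμ : μ₁ < 0) :
    MonotoneOn (logEnergy n lam h) (Ioi 0) := by
  refine monotoneOn_of_hasDerivWithinAt_nonneg (convex_Ioi 0)
    (fun r hr ↦ (hsol.hasDerivAt_logEnergy hr).continuousAt.continuousWithinAt)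
    (fun r hr ↦ (hsol.hasDerivAt_logEnergy (interior_subset hr)).hasDerivWithinAt)
    fun r hr ↦ ?_
  have hr : 0 < r := interior_subset hr
  have hpos := hsol.pos hr
  have hneg : 0 < -deriv h r := neg_pos.2 (hsol.deriv_neg hn hμ hr)
  have hn' : (0 : ℝ) < n - 1 := sub_pos.2 (by exact_mod_cast hn)
  positivity

theorem logEnergy_le (hsol : IsSol n lam μ₁ h) (hn : 1 < n) (hμ : μ₁ < 0) (hr : 0 < r) :
    logEnergy n lam h r ≤ lam / 2 * Real.log (h r) := by
  have hn' : (0 : ℝ) < n - 1 := sub_pos.2 (by exact_mod_cast hn)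
  have hsing : 0 < ((n : ℝ) - 1) / 2 * r⁻¹ := by positivity
  have hneg := hsol.deriv_neg hn hμ hr
  unfold logEnergy
  linarith

theorem exp_logEnergy_le (hsol : IsSol n lam μ₁ h) (hlam : 0 < lam) (hn : 1 < n) (hμ : μ₁ < 0)
    (ha : 0 < a) (har : a ≤ r) : Real.exp (logEnergy n lam h a / (lam / 2)) ≤ h r := by
  have hr : 0 < r := ha.trans_le har
  rw [← Real.le_log_iff_exp_le (hsol.pos hr), div_le_iff₀' (half_pos hlam)]
  exact (hsol.monotoneOn_logEnergy hn hμ ha hr har).trans (hsol.logEnergy_le hn hμ hr)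

theorem pos_of_tendsto (hsol : IsSol n lam μ₁ h) (hlam : 0 < lam) (hn : 1 < n) (hμ : μ₁ < 0)
    (hc : Tendsto h atTop (𝓝 c)) : 0 < c := by
  refine (Real.exp_pos (logEnergy n lam h 1 / (lam / 2))).trans_le (ge_of_tendsto hc ?_)
  filter_upwards [eventually_ge_atTop 1] with r hr
  exact hsol.exp_logEnergy_le hlam hn hμ one_pos hr

theorem exists_tendsto_logEnergy (hsol : IsSol n lam μ₁ h) (hlam : 0 ≤ lam) (hn : 1 < n)
    (hμ : μ₁ < 0) : ∃ L, Tendsto (logEnergy n lam h) atTop (𝓝 L) := by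
  refine ⟨_, tendsto_atTop_csSup_image_Ici (a := 1)
    ((hsol.monotoneOn_logEnergy hn hμ).mono (Ici_subset_Ioi.2 one_pos)) ⟨0, ?_⟩⟩
  rintro _ ⟨r, hr, rfl⟩
  have hr : 0 < r := one_pos.trans_le hr
  have hlog : Real.log (h r) ≤ 0 :=
    Real.log_nonpos (hsol.pos hr).le (hsol.lt_one hn hμ hr).le
  exact (hsol.logEnergy_le hn hμ hr).trans
    (mul_nonpos_of_nonneg_of_nonpos (by positivity) hlog)

theorem tendsto_deriv (hsol : IsSol n lam μ₁ h) (hlam : 0 < lam) (hn : 1 < n) (hμ : μ₁ < 0)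
    (hc : Tendsto h atTop (𝓝 c)) : Tendsto (deriv h) atTop (𝓝 0) := by
  obtain ⟨L, hL⟩ := hsol.exists_tendsto_logEnergy hlam.le hn hμ
  have hsing : Tendsto (fun r : ℝ ↦ ((n : ℝ) - 1) / 2 * r⁻¹) atTop (𝓝 0) := by
    simpa using tendsto_inv_atTop_zero.const_mul (((n : ℝ) - 1) / 2)
  have hlog : Tendsto (fun r ↦ lam / 2 * Real.log (h r)) atTop (𝓝 (lam / 2 * Real.log c)) :=
    (hc.log (hsol.pos_of_tendsto hlam hn hμ hc).ne').const_mul _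
  have hderiv : Tendsto (deriv h) atTop (𝓝 (L + 0 - lam / 2 * Real.log c)) :=
    ((hL.add hsing).sub hlog).congr fun r ↦ by unfold logEnergy; ring
  have hhas : ∀ᶠ r in atTop, HasDerivAt h (deriv h r) r :=
    (eventually_gt_atTop 0).mono fun _ hr ↦ hsol.hasDerivAt hr
  exact eq_zero_of_tendsto_of_tendsto_hasDerivAt hhas hc hderiv ▸ hderiv

end IsSol

theorem expanding_negative_slope (lam μ₁ : ℝ) (n : ℕ) (hlam : 0 < lam) (hn2 : 2 ≤ n)
    (hμ : μ₁ < 0)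
    (h : ℝ → ℝ) (hsol : IsSol n lam μ₁ h) :
    Filter.Tendsto (deriv h) Filter.atTop (nhds 0) ∧
    ∃ c : ℝ, 0 < c ∧ c < 1 ∧ Filter.Tendsto h Filter.atTop (nhds c) := by
  obtain ⟨c, hc⟩ := hsol.exists_tendsto hn2 hμ
  exact ⟨hsol.tendsto_deriv hlam hn2 hμ hc,
    c, hsol.pos_of_tendsto hlam hn2 hμ hc, hsol.lt_one_of_tendsto hn2 hμ hc, hc⟩
end
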